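/- arXiv:2409.13134 — 4 statements merged into one kernel-verified Lean document; each statement's English description precedes it below -/
import Mathlib

section
/- Let M̄ = (M_n : n < ω) ∈ 𝕄 and suppose the set I_* = {n < ω : the action of Aut(M_n) on M_n is not free} is infinite. Then for every ordinal α < (2^{ℵ₀})⁺ there is an elementary substructure M of ∏_n M_n with sr(M) ≥ α. In particular, the Scott ranks of models of Th(∏_n M_n) are unbounded below (2^{ℵ₀})⁺. -/
open FirstOrder

universe u v w

namespace ScottTools

variable (L : FirstOrder.Language.{u, v}) (M : Type w) (N : Type w) [L.Structure M] [L.Structure N]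

/-- Two tuples (of the same length) have the same quantifier-free type. -/
def QFEquiv {n : ℕ} (a : Fin n → M) (b : Fin n → N) : Prop :=
  ∀ φ : L.Formula (Fin n), φ.IsQF → (φ.Realize a ↔ φ.Realize b)

/-- The ordinal-indexed back-and-forth equivalence `(M, ā) ≡_α (N, b̄)`:
`≡₀` is equality of quantifier-free types, `≡_{α+1}` is the back-and-forth condition
with respect to `≡_α`, and limit stages are intersections. -/
def BFEquiv : Ordinal.{w} → (n : ℕ) → (Fin n → M) → (Fin n → N) → Prop
  | α, n, a, b =>
    QFEquiv L M N a b ∧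
    ∀ β : Ordinal.{w}, β < α →
      (∀ x : M, ∃ y : N, BFEquiv β (n + 1) (Fin.snoc a x) (Fin.snoc b y)) ∧
      (∀ y : N, ∃ x : M, BFEquiv β (n + 1) (Fin.snoc a x) (Fin.snoc b y))
  termination_by α => α

/-- `(M, ā) ≡_∞ (N, b̄)`: back-and-forth equivalent for all ordinals. -/
def BFEquivInf (n : ℕ) (a : Fin n → M) (b : Fin n → N) : Prop :=
  ∀ α : Ordinal.{w}, BFEquiv L M N α n a b

/-- The Scott rank of a structure: the least ordinal `α` such that any two finite tuples
that are `≡_α`-equivalent are `≡_∞`-equivalent. -/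
noncomputable def ScottRank : Ordinal.{w} :=
  sInf {α : Ordinal.{w} | ∀ (n : ℕ) (a b : Fin n → M),
    BFEquiv L M M α n a b → BFEquivInf L M M n a b}

/-- `B` is a base for `M`: distinct elements of `M` have distinct complete first-order
types over `B`. -/
def IsBase (B : Set M) : Prop :=
  ∀ a b : M,
    (∀ (k : ℕ) (p : Fin k → M), (∀ i, p i ∈ B) →
      ∀ φ : L.Formula (Fin (k + 1)),
        (φ.Realize (Fin.snoc p a) ↔ φ.Realize (Fin.snoc p b))) →
    a = b

end ScottTools

namespace ProdStr

open FirstOrder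

/-- A purely relational language, with relation symbols `Rs k` of arity `k`. -/
def relLang (Rs : ℕ → Type) : FirstOrder.Language :=
  ⟨fun _ => Empty, Rs⟩

/-- The combined language of the product `∏ₙ Mₙ`: the (disjoint) union of all the
relational languages `ℒₙ` (with relations `Rs n k` of arity `k`), together with new
binary relation symbols `Eₙ` for `n < ω`. -/
def prodLang (Rs : ℕ → ℕ → Type) : FirstOrder.Language :=
  ⟨fun _ => Empty, fun k => (Σ n : ℕ, Rs n k) ⊕ (PLift (k = 2) × ℕ)⟩

/-- The product structure `∏ₙ Mₙ`: `E_m(a,b)` iff `a m = b m`, and `R(ā)` iff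
`Mₘ ⊨ R(ā(m))` for `R` a relation of `ℒₘ`. -/
instance prodStructure (Rs : ℕ → ℕ → Type) (Mf : ℕ → Type)
    [∀ n, (relLang (Rs n)).Structure (Mf n)] :
    (prodLang Rs).Structure (∀ n, Mf n) where
  funMap := fun f _ => f.elim
  RelMap := fun {k} r x =>
    match r with
    | Sum.inl ⟨n, R⟩ =>
        Language.Structure.RelMap (L := relLang (Rs n)) (M := Mf n)
          (R : (relLang (Rs n)).Relations k) (fun i => x i n)
    | Sum.inr ⟨h, m⟩ => x (Fin.cast h.down.symm 0) m = x (Fin.cast h.down.symm 1) m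

/-- The action of `Aut(Mₙ)` on `Mₙ` is free: any automorphism with a fixed point is the
identity. -/
def FreeAut (Rs : ℕ → ℕ → Type) (Mf : ℕ → Type)
    [∀ n, (relLang (Rs n)).Structure (Mf n)] (n : ℕ) : Prop :=
  ∀ σ : Mf n ≃[relLang (Rs n)] Mf n, ∀ x : Mf n, σ x = x → ∀ y : Mf n, σ y = y

end ProdStr

open ScottTools ProdStr FirstOrder

/-!
The vertices of a forest ranked by ordinals, and hence its edges, are coded by infinite sets of
coordinates, any two edges by almost disjoint ones. On the coded coordinates a nontrivial
automorphism fixes `c n` and moves `d n`, and an integer label on the edges acts on the product by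
the corresponding powers of these automorphisms. The universe of the elementary substructure
consists of the finite modifications of `c`, together with, for each vertex `t`, the images of its
base point (`d` on the coordinates of `t` and `c` elsewhere) under the labels whose values on the
edges at `t` sum to zero.

Starting with a label nonzero at a root of rank `α`, the duplicator survives `β < α` rounds: when a
vertex comes into play at which the label does not sum to zero, the defect is moved to a fresh child
of large rank. With unboundedly many rounds the spoiler wins by descending the forest: if the label
of a vertex is not divisible by the period of the automorphisms, then neither is that of one of its
children, but the ranks decrease.
-/

noncomputable section

open Cardinal Filter FirstOrder.Language

namespace ScottTools

variable {L : FirstOrder.Language.{u, v}} {M N : Type w} [L.Structure M] [L.Structure N]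
  {n : ℕ} {a : Fin n → M} {b : Fin n → N} {α β : Ordinal.{w}}

lemma bfEquiv_iff :
    BFEquiv L M N α n a b ↔ QFEquiv L M N a b ∧ ∀ β < α,
      (∀ x, ∃ y, BFEquiv L M N β (n + 1) (Fin.snoc a x) (Fin.snoc b y)) ∧
      (∀ y, ∃ x, BFEquiv L M N β (n + 1) (Fin.snoc a x) (Fin.snoc b y)) := by
  rw [BFEquiv]

lemma BFEquiv.qfEquiv (h : BFEquiv L M N α n a b) : QFEquiv L M N a b :=
  (bfEquiv_iff.1 h).1

lemma BFEquiv.mono (h : BFEquiv L M N α n a b) (hβα : β ≤ α) : BFEquiv L M N β n a b := by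
  rw [bfEquiv_iff] at h ⊢
  exact ⟨h.1, fun γ hγ => h.2 γ (hγ.trans_le hβα)⟩

lemma BFEquivInf.exists_snoc (h : BFEquivInf L M N n a b) (x : M) :
    ∃ y : N, BFEquivInf L M N (n + 1) (Fin.snoc a x) (Fin.snoc b y) := by
  by_contra! hfail
  choose rank hrank using fun y => not_forall.1 (hfail y)
  obtain ⟨y, hy⟩ := ((bfEquiv_iff.1 (h (Order.succ (⨆ y, rank y)))).2 _ (Order.lt_succ _)).1 x
  exact hrank y (hy.mono (Ordinal.le_iSup rank y))

lemma bfEquiv_of_backAndForth (P : Ordinal.{w} → ∀ n, (Fin n → M) → (Fin n → N) → Prop)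
    (qf : ∀ {β n a b}, P β n a b → QFEquiv L M N a b)
    (forth : ∀ {β γ n a b}, P β n a b → γ < β →
      ∀ x, ∃ y, P γ (n + 1) (Fin.snoc a x) (Fin.snoc b y))
    (back : ∀ {β γ n a b}, P β n a b → γ < β →
      ∀ y, ∃ x, P γ (n + 1) (Fin.snoc a x) (Fin.snoc b y))
    (h : P β n a b) : BFEquiv L M N β n a b := by
  induction β using WellFoundedLT.induction generalizing n with
  | _ β ih =>
    refine bfEquiv_iff.2 ⟨qf h, fun γ hγ => ⟨fun x => ?_, fun y => ?_⟩⟩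
    · exact (forth h hγ x).imp fun _ => ih γ hγ
    · exact (back h hγ y).imp fun _ => ih γ hγ

variable (L M) in
lemma exists_bfEquiv_imp_bfEquivInf : ∃ α : Ordinal.{w}, ∀ (n : ℕ) (a b : Fin n → M),
    BFEquiv L M M α n a b → BFEquivInf L M M n a b := by
  have hpair (p : Σ n, (Fin n → M) × (Fin n → M)) : ∃ γ : Ordinal.{w},
      BFEquiv L M M γ p.1 p.2.1 p.2.2 → BFEquivInf L M M p.1 p.2.1 p.2.2 := by
    by_cases hp : BFEquivInf L M M p.1 p.2.1 p.2.2
    · exact ⟨0, fun _ => hp⟩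
    · exact (not_forall.1 hp).imp fun _ hγ h => absurd h hγ
  choose rank hrank using hpair
  exact ⟨⨆ p, rank p, fun n a b h => hrank ⟨n, a, b⟩ (h.mono (Ordinal.le_iSup rank ⟨n, a, b⟩))⟩

lemma le_scottRank
    (h : ∀ β < α, ∃ (n : ℕ) (a b : Fin n → M),
      BFEquiv L M M β n a b ∧ ¬ BFEquivInf L M M n a b) :
    α ≤ ScottRank L M := by
  refine le_csInf (exists_bfEquiv_imp_bfEquivInf L M) fun β hβ => ?_
  by_contra! hlt
  obtain ⟨n, a, b, hab, hnot⟩ := h β hlt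
  exact hnot (hβ n a b hab)

lemma QFEquiv.of_embeddings {P : Type*} [L.Structure P] (f : M ↪[L] P) (g : N ↪[L] P)
    (h : f ∘ a = g ∘ b) : QFEquiv L M N a b := by
  intro φ hφ
  have key := hφ.realize_embedding f (v := a) (xs := default)
  rw [h, Subsingleton.elim (f ∘ default) (g ∘ default), hφ.realize_embedding g] at key
  exact key.symm

end ScottTools

/-- The automorphism group of `M`, realised as a group of permutations of its universe. -/
def autSubgroup (L : FirstOrder.Language.{u, v}) (M : Type w) [L.Structure M] :
    Subgroup (Equiv.Perm M) where
  carrier := Set.range fun g : M ≃[L] M => g.toEquiv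
  mul_mem' := by
    rintro _ _ ⟨f, rfl⟩ ⟨g, rfl⟩
    exact ⟨f.comp g, rfl⟩
  one_mem' := ⟨.refl L M, rfl⟩
  inv_mem' := by
    rintro _ ⟨f, rfl⟩
    exact ⟨f.symm, rfl⟩

namespace ProdStr

variable {Rs : ℕ → ℕ → Type} {Mf : ℕ → Type} [∀ n, (relLang (Rs n)).Structure (Mf n)]

instance : (prodLang Rs).IsRelational := fun _ => inferInstanceAs (IsEmpty Empty)

lemma piCongrRight_mem_autSubgroup {π : ∀ n, Equiv.Perm (Mf n)}
    (hπ : ∀ n, π n ∈ autSubgroup (relLang (Rs n)) (Mf n)) :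
    Equiv.piCongrRight π ∈ autSubgroup (prodLang Rs) (∀ n, Mf n) := by
  choose g hg using hπ
  obtain rfl : (fun n => (g n).toEquiv) = π := funext hg
  refine ⟨⟨Equiv.piCongrRight fun n => (g n).toEquiv, fun f => isEmptyElim f, fun r x => ?_⟩, rfl⟩
  rcases r with ⟨n, R⟩ | ⟨_, n⟩
  · exact (g n).map_rel R fun i => x i n
  · exact (g n).injective.eq_iff

lemma exists_mem_autSubgroup_of_not_freeAut {n : ℕ} (h : ¬ FreeAut Rs Mf n) :
    ∃ σ ∈ autSubgroup (relLang (Rs n)) (Mf n), ∃ c d, σ c = c ∧ σ d ≠ d := by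
  simp only [FreeAut, not_forall] at h
  obtain ⟨σ, c, hc, d, hd⟩ := h
  exact ⟨σ.toEquiv, ⟨σ, rfl⟩, c, d, hc, hd⟩

lemma realize_term_comp {β : Type*} (t : (prodLang Rs).Term β)
    (π : (∀ n, Mf n) → ∀ n, Mf n) (v : β → ∀ n, Mf n) :
    t.realize (π ∘ v) = π (t.realize v) := by
  cases t with
  | var i => rfl
  | func f ts => exact isEmptyElim f

/-- `φ` only mentions finitely many of the languages `ℒₙ` and of the symbols `Eₙ`. -/
lemma exists_finset_forall_realize_comp_iff {β : Type*} {m : ℕ}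
    (φ : (prodLang Rs).BoundedFormula β m) :
    ∃ F : Finset ℕ, ∀ π : Equiv.Perm (∀ n, Mf n), (∀ x, ∀ n ∈ F, π x n = x n) →
      ∀ (v : β → ∀ n, Mf n) (xs : Fin m → ∀ n, Mf n),
        φ.Realize (π ∘ v) (π ∘ xs) ↔ φ.Realize v xs := by
  classical
  induction φ with
  | falsum => exact ⟨∅, fun _ _ _ _ => Iff.rfl⟩
  | equal t₁ t₂ =>
    refine ⟨∅, fun π _ v xs => ?_⟩
    simp only [BoundedFormula.Realize, ← Sum.comp_elim, realize_term_comp]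
    exact π.injective.eq_iff
  | rel R ts =>
    obtain ⟨n, hn⟩ : ∃ n, ∀ π : Equiv.Perm (∀ n, Mf n), (∀ x, π x n = x n) →
        ∀ x, Structure.RelMap R (fun i => π (x i)) ↔ Structure.RelMap R x := by
      rcases R with ⟨n, R⟩ | ⟨_, n⟩ <;>
        exact ⟨n, fun π hπ x => by simp only [Structure.RelMap, hπ]⟩
    refine ⟨{n}, fun π hπ v xs => ?_⟩
    simp only [BoundedFormula.Realize, ← Sum.comp_elim, realize_term_comp]
    exact hn π (fun x => hπ x n (Finset.mem_singleton_self n)) _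
  | imp φ ψ ihφ ihψ =>
    obtain ⟨F, hF⟩ := ihφ
    obtain ⟨G, hG⟩ := ihψ
    refine ⟨F ∪ G, fun π hπ v xs => imp_congr ?_ ?_⟩
    · exact hF π (fun x n hn => hπ x n (Finset.mem_union_left _ hn)) v xs
    · exact hG π (fun x n hn => hπ x n (Finset.mem_union_right _ hn)) v xs
  | all φ ih =>
    obtain ⟨F, hF⟩ := ih
    refine ⟨F, fun π hπ v xs => ?_⟩
    simp only [BoundedFormula.realize_all]
    rw [← π.forall_congr_right]
    exact forall_congr' fun x => by rw [← Fin.comp_snoc, hF π hπ]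

end ProdStr

lemma infinite_setOf_eventually_eq {ι : Type*} {M : ι → Type*}
    (hM : {n | Nontrivial (M n)}.Infinite) (c a : ∀ n, M n) (F : Finset ι) :
    {b : ∀ n, M n | (∀ᶠ n in cofinite, b n = c n) ∧ ∀ n ∈ F, b n = a n}.Infinite := by
  classical
  have hexists (n : ι) : ∃ e : M n, Nontrivial (M n) → e ≠ c n := by
    by_cases hn : Nontrivial (M n)
    · exact (exists_ne (c n)).imp fun _ he _ => he
    · exact ⟨c n, fun h => absurd h hn⟩
  choose e he using hexists
  let b (m : ι) : ∀ n, M n := Function.update (F.piecewise a c) m (e m)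
  have hb_mem (m : ι) (hm : m ∉ F) :
      (∀ᶠ n in cofinite, b m n = c n) ∧ ∀ n ∈ F, b m n = a n := by
    constructor
    · filter_upwards [(insert m F).eventually_cofinite_notMem] with n hn
      rw [Finset.mem_insert, not_or] at hn
      simp [b, hn.1, hn.2]
    · intro n hn
      have hnm : n ≠ m := fun h => hm (h ▸ hn)
      simp [b, hn, hnm]
  have hb_inj : Set.InjOn b ({n | Nontrivial (M n)} \ F) := by
    rintro m ⟨hm, hmF⟩ m' - h
    by_contra hne
    refine he m hm ?_
    simpa [b, hne, Finset.mem_coe.not.1 hmF] using congrFun h m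
  exact ((hM.sdiff F.finite_toSet).image hb_inj).mono <| Set.image_subset_iff.2 fun m hm =>
    hb_mem m hm.2

namespace ProdStr

variable {Rs : ℕ → ℕ → Type} {Mf : ℕ → Type} [∀ n, (relLang (Rs n)).Structure (Mf n)]

/-- Tarski–Vaught: a witness `a` for `φ` may be swapped with a finite modification `b` of `c`
that agrees with `a` on the finitely many coordinates `φ` depends on. -/
lemma exists_mem_realize_snoc {S : (prodLang Rs).Substructure (∀ n, Mf n)}
    (hM : {n | Nontrivial (Mf n)}.Infinite) (c : ∀ n, Mf n)
    (hS : ∀ x : ∀ n, Mf n, (∀ᶠ n in cofinite, x n = c n) → x ∈ S)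
    (k : ℕ) (φ : (prodLang Rs).BoundedFormula Empty (k + 1)) (xs : Fin k → S) (a : ∀ n, Mf n)
    (ha : φ.Realize default (Fin.snoc ((↑) ∘ xs) a : _ → ∀ n, Mf n)) :
    ∃ b : S, φ.Realize default (Fin.snoc ((↑) ∘ xs) b : _ → ∀ n, Mf n) := by
  classical
  by_cases haS : a ∈ S
  · exact ⟨⟨a, haS⟩, ha⟩
  obtain ⟨F, hF⟩ := exists_finset_forall_realize_comp_iff (Mf := Mf) φ
  obtain ⟨b, ⟨hbc, hba⟩, hb⟩ := (infinite_setOf_eventually_eq hM c a F).exists_notMem_finite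
    (Set.finite_range fun i => (xs i : ∀ n, Mf n))
  have hswap : ∀ x, ∀ n ∈ F, Equiv.swap a b x n = x n := by
    intro x n hn
    rw [Equiv.swap_apply_def]
    split_ifs with hxa hxb
    · rw [hxa, hba n hn]
    · rw [hxb, hba n hn]
    · rfl
  have hxs : Equiv.swap a b ∘ ((↑) ∘ xs) = ((↑) ∘ xs : Fin k → ∀ n, Mf n) := by
    funext i
    exact Equiv.swap_apply_of_ne_of_ne (fun h => haS (h ▸ (xs i).2)) (fun h => hb ⟨i, h⟩)
  refine ⟨⟨b, hS b hbc⟩, ?_⟩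
  have hb_realize := (hF (Equiv.swap a b) hswap default _).2 ha
  rwa [Fin.comp_snoc, hxs, Equiv.swap_apply_left, Subsingleton.elim (_ ∘ default) default]
    at hb_realize

end ProdStr

lemma exists_infinite_subset_dvd_iff {ι : Type*} (p : ι → ℕ) {I : Set ι} (hI : I.Infinite) :
    ∃ J ⊆ I, J.Infinite ∧
      ∃ N : ℤ, ∀ k : ℤ, ∀ᶠ n in cofinite, n ∈ J → ((p n : ℤ) ∣ k ↔ N ∣ k) := by
  by_cases! hfiber : ∃ N : ℕ, (I ∩ p ⁻¹' {N}).Infinite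
  · obtain ⟨N, hN⟩ := hfiber
    exact ⟨_, Set.inter_subset_left, hN, N, fun k => .of_forall fun n hn => by rw [hn.2]⟩
  · refine ⟨I, subset_rfl, hI, 0, fun k => ?_⟩
    rcases eq_or_ne k 0 with rfl | hk
    · simp
    have hsmall : (⋃ N ∈ Set.Iic k.natAbs, I ∩ p ⁻¹' {N}).Finite :=
      (Set.finite_Iic _).biUnion fun N _ => hfiber N
    filter_upwards [hsmall.eventually_cofinite_notMem] with n hn hnI
    simp only [zero_dvd_iff, hk, iff_false]
    intro hdvd
    exact hn (Set.mem_biUnion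
      (Nat.le_of_dvd (Int.natAbs_pos.2 hk) (Int.natCast_dvd.1 hdvd)) ⟨hnI, rfl⟩)

/-- Two distinct members of the family meet in an infinite set, three of them in a finite one: the
edges of the complete graph on `ι` are coded by infinite, almost disjoint sets. -/
structure IsEdgeFamily {ι κ : Type*} (A : ι → Set κ) : Prop where
  infinite_inter : ∀ {i j}, i ≠ j → (A i ∩ A j).Infinite
  finite_inter : ∀ {i j k}, i ≠ j → i ≠ k → j ≠ k → (A i ∩ A j ∩ A k).Finite

namespace IsEdgeFamily

variable {ι ι' κ κ' : Type*} {A : ι → Set κ}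

lemma comp (hA : IsEdgeFamily A) {f : ι' → ι} (hf : f.Injective) :
    IsEdgeFamily fun i => A (f i) where
  infinite_inter h := hA.infinite_inter (hf.ne h)
  finite_inter hij hik hjk := hA.finite_inter (hf.ne hij) (hf.ne hik) (hf.ne hjk)

lemma image (hA : IsEdgeFamily A) {f : κ → κ'} (hf : f.Injective) :
    IsEdgeFamily fun i => f '' A i where
  infinite_inter h := by
    rw [← Set.image_inter hf]
    exact (hA.infinite_inter h).image hf.injOn
  finite_inter hij hik hjk := by
    rw [← Set.image_inter hf, ← Set.image_inter hf]
    exact (hA.finite_inter hij hik hjk).image f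

end IsEdgeFamily

lemma eventually_prefix_ne {x y : ℕ → Bool} (h : x ≠ y) :
    ∀ᶠ n in cofinite, (fun i : Fin n => x i) ≠ fun i : Fin n => y i := by
  obtain ⟨m, hm⟩ := Function.ne_iff.1 h
  rw [Nat.cofinite_eq_atTop]
  filter_upwards [eventually_gt_atTop m] with n hn heq
  exact hm (congrFun heq ⟨m, hn⟩)

/-- The pairs of binary words of equal length one of which is an initial segment of `x`. -/
def prefixPairs (x : ℕ → Bool) : Set (Σ n, (Fin n → Bool) × (Fin n → Bool)) :=
  {p | (fun i : Fin p.1 => x i) = p.2.1 ∨ (fun i : Fin p.1 => x i) = p.2.2}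

lemma isEdgeFamily_prefixPairs : IsEdgeFamily prefixPairs where
  infinite_inter {x y} _ := by
    refine Set.infinite_of_injective_forall_mem
      (f := fun n => ⟨n, fun i => x i, fun i => y i⟩)
      (fun m n h => congrArg Sigma.fst h) fun n => ?_
    exact ⟨Or.inl rfl, Or.inr rfl⟩
  finite_inter {x y z} hxy hxz hyz := by
    have hdistinct := (eventually_prefix_ne hxy).and
      ((eventually_prefix_ne hxz).and (eventually_prefix_ne hyz))
    refine ((eventually_cofinite.1 hdistinct).preimage' (f := Sigma.fst) fun n _ =>
      (Set.finite_range (Sigma.mk n)).subset ?_).subset ?_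
    · rintro ⟨_, w⟩ rfl
      exact ⟨w, rfl⟩
    · rintro ⟨n, u, v⟩ ⟨⟨hx, hy⟩, hz⟩ ⟨hxy, hxz, hyz⟩
      simp only [prefixPairs, Set.mem_ofPred_eq] at hx hy hz
      grind

lemma exists_isEdgeFamily {ι : Type u} (hι : #ι ≤ 𝔠) {I : Set ℕ} (hI : I.Infinite) :
    ∃ A : ι → Set ℕ, (∀ i, A i ⊆ I) ∧ IsEdgeFamily A := by
  obtain ⟨f⟩ : Nonempty (ι ↪ (ℕ → Bool)) := lift_mk_le'.1 (by simpa using hι)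
  obtain ⟨code, hcode⟩ :=
    exists_injective_nat (Σ n, (Fin n → Bool) × (Fin n → Bool))
  have := hI.to_subtype
  let e := fun p => (Infinite.natEmbedding I (code p) : ℕ)
  have he : e.Injective :=
    Subtype.val_injective.comp ((Infinite.natEmbedding I).injective.comp hcode)
  refine ⟨fun i => e '' prefixPairs (f i), fun i => ?_,
    (isEdgeFamily_prefixPairs.comp f.injective).image he⟩
  exact Set.image_subset_iff.2 fun p _ => (Infinite.natEmbedding I (code p)).2

/-- A forest, given by its partial parent function, with an ordinal rank that decreases from parent
to child and such that every vertex has infinitely many children of rank at least any ordinal below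
its own rank. The surplus of children lets the duplicator avoid the vertices already in play. -/
structure RankedForest (T : Type*) where
  parent : T → Option T
  rank : T → Ordinal.{w}
  rank_lt : ∀ {z t}, parent z = some t → rank z < rank t
  infinite_children : ∀ {t γ}, γ < rank t → {z | parent z = some t ∧ γ ≤ rank z}.Infinite

namespace RankedForest

/-- Vertices are finite sequences with entries in `α × ℕ`, latest entry first. The rank is the
ordinal of the latest entry, or `α` for the empty sequence; the parent drops that entry. Sequences
whose ordinals fail to decrease at the latest entry become spurious roots. -/
def ofOrdinal (α : Ordinal.{w}) : RankedForest.{w} (List (Set.Iio α × ℕ)) where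
  parent
    | [] => none
    | (β, _) :: l => if β < (l.head?.elim α fun e => e.1) then some l else none
  rank l := l.head?.elim α fun e => e.1
  rank_lt {z t} h := by
    cases z with
    | nil => cases h
    | cons e l =>
      obtain ⟨hlt, rfl⟩ := by simpa using h
      simpa
  infinite_children {t γ} hγ := by
    have hγα : γ < α := hγ.trans_le <| by
      cases t with
      | nil => exact le_rfl
      | cons e _ => exact e.1.2.le
    refine Set.infinite_of_injective_forall_mem (f := fun n : ℕ => (⟨γ, hγα⟩, n) :: t)
      (fun m n h => by simpa using h) fun n => ?_
    simpa using hγ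

lemma mk_ofOrdinal_le {α : Ordinal.{w}} (hα : α < (Order.succ (𝔠 : Cardinal.{w})).ord) :
    #(Option (List (Set.Iio α × ℕ))) ≤ 𝔠 := by
  have hIio : #(Set.Iio α) ≤ 𝔠 := by
    rw [mk_Iio_ordinal, lift_le_continuum]
    exact Order.lt_succ_iff.1 (lt_ord.1 hα)
  have hprod : #(Set.Iio α × ℕ) ≤ 𝔠 := by
    simpa using mul_le_of_le aleph0_le_continuum hIio aleph0_le_continuum
  have hlist : #(List (Set.Iio α × ℕ)) ≤ 𝔠 :=
    (mk_list_le_max _).trans (max_le aleph0_le_continuum hprod)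
  rw [mk_option]
  exact add_le_of_le aleph0_le_continuum hlist (one_le_aleph0.trans aleph0_le_continuum)

variable {T : Type*} (Γ : RankedForest.{w} T)

lemma parent_ne_self (t : T) : Γ.parent t ≠ some t := fun h => (Γ.rank_lt h).false

open Classical in
/-- The value of an integer label at `t` plus the sum of its values at the children of `t`. -/
def vertexSum (t : T) : (T →₀ ℤ) →ₗ[ℤ] ℤ :=
  Finsupp.lapply t + Finsupp.linearCombination ℤ fun z => if Γ.parent z = some t then 1 else 0

variable {Γ} {F : Finset T} {κ : T →₀ ℤ} {t z : T} {β γ : Ordinal.{w}}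

lemma vertexSum_eq_apply (h : ∀ z, Γ.parent z = some t → κ z = 0) : Γ.vertexSum t κ = κ t := by
  rw [vertexSum, LinearMap.add_apply, Finsupp.lapply_apply, Finsupp.linearCombination_apply]
  refine add_eq_left.2 (Finset.sum_eq_zero fun z hz => ?_)
  simp [mt (h z) (Finsupp.mem_support_iff.1 hz)]

lemma vertexSum_single_of_parent_eq (h : Γ.parent z = some t) (m : ℤ) :
    Γ.vertexSum t (Finsupp.single z m) = m := by
  have hzt : z ≠ t := fun hzt => Γ.parent_ne_self t (hzt ▸ h)
  simp [vertexSum, h, hzt]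

lemma vertexSum_single_of_parent_ne (hzt : z ≠ t) (h : Γ.parent z ≠ some t) (m : ℤ) :
    Γ.vertexSum t (Finsupp.single z m) = 0 := by
  simp [vertexSum, h, hzt]

lemma exists_child_not_dvd {N : ℤ} (hκ : Γ.vertexSum t κ = 0) (ht : ¬ N ∣ κ t) :
    ∃ z, Γ.parent z = some t ∧ ¬ N ∣ κ z := by
  by_contra! hchildren
  refine ht ?_
  rw [vertexSum, LinearMap.add_apply, Finsupp.lapply_apply, Finsupp.linearCombination_apply] at hκ
  rw [eq_neg_of_add_eq_zero_left hκ, dvd_neg]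
  refine Finset.dvd_sum fun z _ => ?_
  dsimp only
  split_ifs with hz
  · simpa using hchildren z hz
  · simp

variable (Γ) in
/-- The invariant of the game with `β` rounds left, `F` being the set of vertices in play: the
label `κ` has vertex sum zero on `F`, and its support leaves `F` only through children of rank at
least `β`. -/
structure IsBalanced (β : Ordinal.{w}) (F : Finset T) (κ : T →₀ ℤ) : Prop where
  vertexSum_eq_zero : ∀ {t}, t ∈ F → Γ.vertexSum t κ = 0
  parent_mem : ∀ {y p}, κ y ≠ 0 → Γ.parent y = some p → p ∈ F
  le_rank : ∀ {y}, y ∉ F → κ y ≠ 0 → β ≤ Γ.rank y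

namespace IsBalanced

lemma neg (h : Γ.IsBalanced β F κ) : Γ.IsBalanced β F (-κ) where
  vertexSum_eq_zero ht := by rw [map_neg, h.vertexSum_eq_zero ht, neg_zero]
  parent_mem hy := h.parent_mem (neg_ne_zero.1 hy)
  le_rank hF hy := h.le_rank hF (neg_ne_zero.1 hy)

lemma mono (h : Γ.IsBalanced β F κ) (hγ : γ ≤ β) : Γ.IsBalanced γ F κ where
  vertexSum_eq_zero := h.vertexSum_eq_zero
  parent_mem := h.parent_mem
  le_rank hF hy := hγ.trans (h.le_rank hF hy)

lemma vertexSum_eq_apply (h : Γ.IsBalanced β F κ) (ht : t ∉ F) : Γ.vertexSum t κ = κ t :=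
  RankedForest.vertexSum_eq_apply fun _ hz => of_not_not fun hκ => ht (h.parent_mem hκ hz)

lemma insert [DecidableEq T] (h : Γ.IsBalanced β F κ) (ht : Γ.vertexSum t κ = 0) :
    Γ.IsBalanced β (insert t F) κ where
  vertexSum_eq_zero hs := by
    obtain rfl | hs := Finset.mem_insert.1 hs
    exacts [ht, h.vertexSum_eq_zero hs]
  parent_mem hy hp := Finset.mem_insert_of_mem (h.parent_mem hy hp)
  le_rank hF := h.le_rank (mt Finset.mem_insert_of_mem hF)

lemma insert_sub_single [DecidableEq T] (h : Γ.IsBalanced β F κ) (ht : t ∉ F) (hzF : z ∉ F)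
    (hz : Γ.parent z = some t) (hβz : β ≤ Γ.rank z) :
    Γ.IsBalanced β (Insert.insert t F) (κ - Finsupp.single z (κ t)) where
  vertexSum_eq_zero {s} hs := by
    rw [map_sub, sub_eq_zero]
    obtain rfl | hs := Finset.mem_insert.1 hs
    · rw [h.vertexSum_eq_apply ht, vertexSum_single_of_parent_eq hz]
    · have hzs : Γ.parent z ≠ some s :=
        hz ▸ (Option.some_injective _).ne (ne_of_mem_of_not_mem hs ht).symm
      rw [h.vertexSum_eq_zero hs,
        vertexSum_single_of_parent_ne (ne_of_mem_of_not_mem hs hzF).symm hzs]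
  parent_mem {y p} hy hp := by
    by_cases hyz : y = z
    · exact Finset.mem_insert.2 (.inl (Option.some_injective _ (hp.symm.trans (hyz ▸ hz))))
    · exact Finset.mem_insert_of_mem (h.parent_mem (by simpa [Ne.symm hyz] using hy) hp)
  le_rank {y} hF hy := by
    by_cases hyz : y = z
    · exact hyz ▸ hβz
    · exact h.le_rank (mt Finset.mem_insert_of_mem hF) (by simpa [Ne.symm hyz] using hy)

/-- The imbalance that `t` brings into play is moved to a fresh child of `t`. -/
lemma exists_insert [DecidableEq T] (h : Γ.IsBalanced β F κ) (hγ : γ < β) (t : T) :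
    ∃ κ', Γ.IsBalanced γ (Insert.insert t F) κ' ∧
      ∀ y, κ' y ≠ κ y → y ∉ F ∧ ∀ p ∈ F, Γ.parent y ≠ some p := by
  by_cases ht : Γ.vertexSum t κ = 0
  · exact ⟨κ, (h.mono hγ.le).insert ht, fun y hy => absurd rfl hy⟩
  have htF : t ∉ F := mt h.vertexSum_eq_zero ht
  rw [h.vertexSum_eq_apply htF] at ht
  obtain ⟨z, ⟨hz, hγz⟩, hzF⟩ :=
    (Γ.infinite_children (hγ.trans_le (h.le_rank htF ht))).exists_notMem_finset F
  refine ⟨_, (h.mono hγ.le).insert_sub_single htF hzF hz hγz, fun y hy => ?_⟩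
  obtain rfl : y = z := by
    by_contra hyz
    simp [Ne.symm hyz] at hy
  exact ⟨hzF, fun p hp => hz ▸ (Option.some_injective _).ne (ne_of_mem_of_not_mem hp htF).symm⟩

end IsBalanced

lemma exists_isBalanced_singleton (ht : Γ.parent t = none) (hz : Γ.parent z = some t)
    (hβt : β ≤ Γ.rank t) (hβz : β ≤ Γ.rank z) : ∃ κ, Γ.IsBalanced β {t} κ ∧ κ z = -1 := by
  classical
  have hzt : z ≠ t := fun h => Γ.parent_ne_self t (h ▸ hz)
  have hsingle : Γ.IsBalanced β ∅ (Finsupp.single t 1) := by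
    constructor <;> simp +contextual [Finsupp.single_apply_ne_zero, ht, hβt]
  refine ⟨_, hsingle.insert_sub_single (Finset.notMem_empty t) (Finset.notMem_empty z) hz hβz,
    ?_⟩
  simp [hzt.symm]

end RankedForest

/-- Permutations `σ n` fixing `c n` and, for `n ∈ I`, moving `d n`. For a fixed exponent `k` almost
all of the points `d n`, `n ∈ I`, agree on whether `σ n ^ k` fixes them, and they are fixed exactly
if `N ∣ k`; so `N` is their common period, or `0` if the periods tend to infinity. -/
structure RotationSystem {ι : Type*} (M : ι → Type*) where
  I : Set ι
  σ : ∀ n, Equiv.Perm (M n)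
  c : ∀ n, M n
  d : ∀ n, M n
  N : ℤ
  σ_c : ∀ n, σ n (c n) = c n
  σ_d : ∀ {n}, n ∈ I → σ n (d n) ≠ d n
  zpow_d : ∀ k : ℤ, ∀ᶠ n in cofinite, n ∈ I → ((σ n ^ k) (d n) = d n ↔ N ∣ k)

namespace RotationSystem

variable {ι : Type*} {M : ι → Type*} (R : RotationSystem M)

/-- The permutation of the product acting on the coordinate `n` as `σ n ^ k n`. -/
def rotate (k : ι → ℤ) : Equiv.Perm (∀ n, M n) := Equiv.piCongrRight fun n => R.σ n ^ k n

lemma rotate_apply (k : ι → ℤ) (x : ∀ n, M n) (n : ι) :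
    R.rotate k x n = (R.σ n ^ k n) (x n) := rfl

lemma rotate_add (k l : ι → ℤ) (x : ∀ n, M n) :
    R.rotate (k + l) x = R.rotate k (R.rotate l x) := by
  funext n
  simp only [rotate_apply, Pi.add_apply, zpow_add, Equiv.Perm.mul_apply]

lemma rotate_zero (x : ∀ n, M n) : R.rotate 0 x = x := rfl

lemma zpow_c (k : ℤ) (n : ι) : (R.σ n ^ k) (R.c n) = R.c n :=
  Equiv.Perm.zpow_apply_eq_self_of_apply_eq_self (R.σ_c n) k

lemma zpow_d_ne_c {n : ι} (hn : n ∈ R.I) (k : ℤ) : (R.σ n ^ k) (R.d n) ≠ R.c n := by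
  intro h
  have hdc : R.d n = R.c n := (R.σ n ^ k).injective (h.trans (R.zpow_c k n).symm)
  exact R.σ_d hn (hdc ▸ R.σ_c n)

lemma zpow_d_eq_zpow_d_iff (k l : ℤ) :
    ∀ᶠ n in cofinite, n ∈ R.I → ((R.σ n ^ k) (R.d n) = (R.σ n ^ l) (R.d n) ↔ R.N ∣ k - l) := by
  filter_upwards [R.zpow_d (k - l)] with n hn hnI
  have hsplit : (R.σ n ^ k) (R.d n) = (R.σ n ^ l) ((R.σ n ^ (k - l)) (R.d n)) := by
    rw [← Equiv.Perm.mul_apply, ← zpow_add, add_sub_cancel]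
  rw [hsplit, (R.σ n ^ l).injective.eq_iff, hn hnI]

lemma not_N_dvd_one (hI : R.I.Infinite) : ¬ R.N ∣ 1 := by
  intro h
  obtain ⟨n, hn, hnI⟩ := ((R.zpow_d 1).and_frequently hI.frequently_cofinite).exists
  exact R.σ_d hnI (by simpa using (hn hnI).2 h)

lemma exists_rotate_eq {J : Type*} {a : J → ∀ n, M n} {k l : ι → ℤ}
    [Finite J] (h : ∀ i, ∀ᶠ n in cofinite, R.rotate k (a i) n = R.rotate l (a i) n) :
    ∃ k', k' =ᶠ[cofinite] l ∧ ∀ i, R.rotate k' (a i) = R.rotate k (a i) := by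
  classical
  refine ⟨fun n => if ∀ i, R.rotate k (a i) n = R.rotate l (a i) n then l n else k n, ?_,
    fun i => funext fun n => ?_⟩
  · filter_upwards [eventually_all.2 h] with n hn
    exact if_pos hn
  · rw [rotate_apply]
    split_ifs with hn
    exacts [(hn i).symm, rfl]

end RotationSystem

lemma ProdStr.exists_rotationSystem {Rs : ℕ → ℕ → Type} {Mf : ℕ → Type}
    [∀ n, (relLang (Rs n)).Structure (Mf n)] [∀ n, Nonempty (Mf n)]
    (h : {n | ¬ FreeAut Rs Mf n}.Infinite) :
    ∃ R : RotationSystem Mf, R.I.Infinite ∧ ∀ n, R.σ n ∈ autSubgroup (relLang (Rs n)) (Mf n) := by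
  have hexists (n : ℕ) : ∃ σ ∈ autSubgroup (relLang (Rs n)) (Mf n), ∃ c d, σ c = c ∧
      (¬ FreeAut Rs Mf n → σ d ≠ d) := by
    by_cases hn : FreeAut Rs Mf n
    · exact ⟨1, one_mem _, Classical.arbitrary _, Classical.arbitrary _, rfl, fun h => absurd hn h⟩
    · obtain ⟨σ, hσ, c, d, hc, hd⟩ := exists_mem_autSubgroup_of_not_freeAut hn
      exact ⟨σ, hσ, c, d, hc, fun _ => hd⟩
  choose σ hσ c d hc hd using hexists
  obtain ⟨I, hIfree, hI, N, hN⟩ :=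
    exists_infinite_subset_dvd_iff (fun n => MulAction.period (σ n) (d n)) h
  refine ⟨⟨I, σ, c, d, N, hc, fun hn => hd _ (hIfree hn), fun k => ?_⟩, hI, hσ⟩
  filter_upwards [hN k] with n hn hnI
  rw [← hn hnI, ← MulAction.zpow_smul_eq_iff_period_dvd, Equiv.Perm.smul_def]

/-- A ranked forest whose vertices, together with an extra vertex `none` above the roots, are coded
by sets of coordinates of a rotation system. -/
structure Coding (T : Type*) {ι : Type*} (M : ι → Type*) extends
    RankedForest.{w} T, RotationSystem M where
  A : Option T → Set ι
  A_subset : ∀ v, A v ⊆ I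
  isEdgeFamily : IsEdgeFamily A

namespace Coding

variable {T ι : Type*} {M : ι → Type*} (Z : Coding.{w} T M)

/-- The set of coordinates coding the edge from `y` to its parent, or to `none` if `y` is a root. -/
def edgeSet (y : T) : Set ι := Z.A (some y) ∩ Z.A (Z.parent y)

/-- The exponents with which a label rotates the coordinates: the sum of the indicator functions of
the edges, weighted by the label. -/
def exponent : (T →₀ ℤ) →ₗ[ℤ] (ι → ℤ) :=
  Finsupp.linearCombination ℤ fun y => (Z.edgeSet y).indicator 1

open Classical in
/-- The point of the product that represents the vertex `t`. -/
def basePoint (t : T) (n : ι) : M n := if n ∈ Z.A (some t) then Z.d n else Z.c n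

/-- `x` is, up to finitely many coordinates, a rotation of the base point of `t` by a label with
vertex sum zero at `t`. -/
def IsOver (t : T) (x : ∀ n, M n) : Prop :=
  ∃ κ, Z.vertexSum t κ = 0 ∧
    ∀ᶠ n in cofinite, x n = Z.rotate (Z.exponent κ) (Z.basePoint t) n

/-- The finite modifications of `c` together with the points over the vertices in `F`. For
`F = univ` this is the universe of the elementary substructure of large Scott rank. -/
def elements (F : Set T) : Set (∀ n, M n) :=
  {x | (∀ᶠ n in cofinite, x n = Z.c n) ∨ ∃ t ∈ F, Z.IsOver t x}

variable {Z} {κ : T →₀ ℤ} {k : ι → ℤ} {x : ∀ n, M n} {t y z : T} {F G : Set T}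

lemma elements_mono (h : F ⊆ G) : Z.elements F ⊆ Z.elements G :=
  fun _ => Or.imp_right fun ⟨t, ht, hx⟩ => ⟨t, h ht, hx⟩

variable (Z y) in
lemma infinite_edgeSet : (Z.edgeSet y).Infinite :=
  Z.isEdgeFamily.infinite_inter (Z.parent_ne_self y).symm

variable (Z y) in
lemma edgeSet_subset : Z.edgeSet y ⊆ Z.I := fun _ hn => Z.A_subset _ hn.1

lemma finite_edgeSet_inter (hyt : y ≠ t) (h : Z.parent y ≠ some t) :
    (Z.edgeSet y ∩ Z.A (some t)).Finite :=
  Z.isEdgeFamily.finite_inter (Z.parent_ne_self y).symm ((Option.some_injective _).ne hyt) h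

lemma finite_edgeSet_inter_edgeSet (h : y ≠ z) : (Z.edgeSet y ∩ Z.edgeSet z).Finite := by
  by_cases hyz : Z.parent y = some z
  · have hzy : Z.parent z ≠ some y := fun hzy => (Z.rank_lt hyz).asymm (Z.rank_lt hzy)
    exact (finite_edgeSet_inter h.symm hzy).subset fun _ hn => ⟨hn.2, hn.1.1⟩
  · exact (finite_edgeSet_inter h hyz).subset fun _ hn => ⟨hn.1, hn.2.1⟩

lemma exponent_eventually_eq_zero {B : Set ι} (h : ∀ y, κ y ≠ 0 → (Z.edgeSet y ∩ B).Finite) :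
    ∀ᶠ n in cofinite, n ∈ B → Z.exponent κ n = 0 := by
  have hedges : ∀ᶠ n in cofinite, ∀ y ∈ κ.support, n ∉ Z.edgeSet y ∩ B :=
    (eventually_all_finset _).2 fun y hy =>
      (h y (Finsupp.mem_support_iff.1 hy)).eventually_cofinite_notMem
  filter_upwards [hedges] with n hn hnB
  rw [exponent, Finsupp.linearCombination_apply, Finsupp.sum, Finset.sum_apply]
  refine Finset.sum_eq_zero fun y hy => ?_
  have hny : n ∉ Z.edgeSet y := fun hny => hn y hy ⟨hny, hnB⟩
  simp [hny]

variable (κ y) in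
lemma exponent_eventually_eq_apply :
    ∀ᶠ n in cofinite, n ∈ Z.edgeSet y → Z.exponent κ n = κ y := by
  have herase : ∀ᶠ n in cofinite, n ∈ Z.edgeSet y → Z.exponent (κ.erase y) n = 0 :=
    exponent_eventually_eq_zero fun z hz =>
      finite_edgeSet_inter_edgeSet fun h => hz (h ▸ Finsupp.erase_same)
  filter_upwards [herase] with n hn hny
  rw [← Finsupp.single_add_erase y κ, map_add, Pi.add_apply, hn hny]
  simp [exponent, hny]

lemma basePoint_of_mem {n : ι} (hn : n ∈ Z.A (some t)) : Z.basePoint t n = Z.d n := if_pos hn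

lemma basePoint_of_notMem {n : ι} (hn : n ∉ Z.A (some t)) : Z.basePoint t n = Z.c n := if_neg hn

lemma rotate_basePoint_eq_c_iff {n : ι} :
    Z.rotate k (Z.basePoint t) n = Z.c n ↔ n ∉ Z.A (some t) := by
  rw [Z.rotate_apply]
  by_cases hn : n ∈ Z.A (some t)
  · simp [basePoint_of_mem hn, hn, Z.zpow_d_ne_c (Z.A_subset _ hn)]
  · simp [basePoint_of_notMem hn, hn, Z.zpow_c]

lemma rotate_exponent_eventually_eq (hx : x ∈ Z.elements F)
    (hκ : ∀ y, κ y ≠ 0 → y ∉ F ∧ ∀ p ∈ F, Z.parent y ≠ some p) :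
    ∀ᶠ n in cofinite, Z.rotate (Z.exponent κ) x n = x n := by
  rcases hx with hx | ⟨t, ht, l, -, hx⟩
  · filter_upwards [hx] with n hn
    rw [Z.rotate_apply, hn, Z.zpow_c]
  · have hzero : ∀ᶠ n in cofinite, n ∈ Z.A (some t) → Z.exponent κ n = 0 :=
      exponent_eventually_eq_zero fun y hy =>
        finite_edgeSet_inter (fun hyt => (hκ y hy).1 (hyt ▸ ht)) ((hκ y hy).2 t ht)
    filter_upwards [hx, hzero] with n hn hzero
    rw [Z.rotate_apply, hn]
    by_cases hnt : n ∈ Z.A (some t)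
    · rw [hzero hnt, zpow_zero, Equiv.Perm.one_apply]
    · rw [rotate_basePoint_eq_c_iff.2 hnt, Z.zpow_c]

lemma isOver_basePoint : Z.IsOver t (Z.basePoint t) :=
  ⟨0, map_zero _, .of_forall fun n => by rw [map_zero, Z.rotate_zero]⟩

lemma IsOver.rotate (hx : Z.IsOver t x) (hκ : Z.vertexSum t κ = 0)
    (hk : k =ᶠ[cofinite] Z.exponent κ) : Z.IsOver t (Z.rotate k x) := by
  obtain ⟨l, hl, hx⟩ := hx
  refine ⟨κ + l, by rw [map_add, hκ, hl, add_zero], ?_⟩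
  filter_upwards [hk, hx] with n hkn hxn
  rw [map_add, Z.rotate_add, Z.rotate_apply, Z.rotate_apply _ (Z.rotate _ _), hkn, hxn]

lemma rotate_mem_elements (hx : x ∈ Z.elements F) (hκ : ∀ t ∈ F, Z.vertexSum t κ = 0)
    (hk : k =ᶠ[cofinite] Z.exponent κ) : Z.rotate k x ∈ Z.elements F := by
  refine hx.imp (fun hx => ?_) fun ⟨t, ht, hx⟩ => ⟨t, ht, hx.rotate (hκ t ht) hk⟩
  filter_upwards [hx] with n hn
  rw [Z.rotate_apply, hn, Z.zpow_c]

lemma isOver_of_eq_c_iff (hx : x ∈ Z.elements F) (h : ∀ n, x n = Z.c n ↔ n ∉ Z.A (some y)) :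
    Z.IsOver y x := by
  have hy_inf : (Z.A (some y) ∩ Z.A none).Infinite :=
    Z.isEdgeFamily.infinite_inter (Option.some_ne_none y)
  rcases hx with hx | ⟨t, -, hx⟩
  · obtain ⟨n, hn, hny⟩ := (hx.and_frequently hy_inf.frequently_cofinite).exists
    exact absurd hny.1 ((h n).1 hn)
  · obtain rfl | hty := eq_or_ne t y
    · exact hx
    obtain ⟨l, -, hx⟩ := hx
    have hfin : (Z.A (some y) ∩ Z.A none ∩ Z.A (some t)).Finite :=
      Z.isEdgeFamily.finite_inter (Option.some_ne_none y)
        ((Option.some_injective _).ne hty.symm) (Option.some_ne_none t).symm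
    obtain ⟨n, ⟨hxn, hnt⟩, hny⟩ :=
      ((hx.and hfin.eventually_cofinite_notMem).and_frequently hy_inf.frequently_cofinite).exists
    have hxc : x n = Z.c n := hxn.trans (rotate_basePoint_eq_c_iff.2 fun hn => hnt ⟨hny, hn⟩)
    exact absurd hny.1 ((h n).1 hxc)

end Coding

namespace Coding

variable {T ι : Type*} {M : ι → Type*} (Z : Coding.{w} T M) {m : ℕ} {a b : Fin m → ∀ n, M n}
  {x : ∀ n, M n} {β γ : Ordinal.{w}}

/-- The duplicator's invariant with `β` rounds left: the second tuple is a rotation of the first one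
by a label balanced on a set of vertices over which the first tuple lies. The exponents may deviate
from those of the label at finitely many coordinates, since labels change during the game. -/
def Position (β : Ordinal.{w}) {m : ℕ} (a b : Fin m → ∀ n, M n) : Prop :=
  ∃ (F : Finset T) (κ : T →₀ ℤ) (k : ι → ℤ), Z.IsBalanced β F κ ∧ k =ᶠ[cofinite] Z.exponent κ ∧
    (∀ i, a i ∈ Z.elements F) ∧ ∀ i, b i = Z.rotate k (a i)

variable {Z}

namespace Position

lemma symm (h : Z.Position β a b) : Z.Position β b a := by
  obtain ⟨F, κ, k, hκ, hk, ha, hb⟩ := h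
  refine ⟨F, -κ, -k, hκ.neg, ?_, fun i => ?_, fun i => ?_⟩
  · rw [map_neg]
    exact hk.neg
  · rw [hb]
    exact rotate_mem_elements (ha i) (fun _ => hκ.vertexSum_eq_zero) hk
  · rw [hb, ← Z.rotate_add, neg_add_cancel, Z.rotate_zero]

lemma exists_finset_mem_elements (h : Z.Position β a b) (hγ : γ < β)
    (hx : x ∈ Z.elements Set.univ) :
    ∃ (F : Finset T) (κ : T →₀ ℤ) (k : ι → ℤ), Z.IsBalanced γ F κ ∧
      k =ᶠ[cofinite] Z.exponent κ ∧ (∀ i, a i ∈ Z.elements F) ∧ (∀ i, b i = Z.rotate k (a i)) ∧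
      x ∈ Z.elements F := by
  classical
  obtain ⟨F, κ, k, hκ, hk, ha, hb⟩ := h
  rcases hx with hx | ⟨t, -, hx⟩
  · exact ⟨F, κ, k, hκ.mono hγ.le, hk, ha, hb, Or.inl hx⟩
  · obtain ⟨κ', hκ', hdiff⟩ := hκ.exists_insert hγ t
    have hagree (i) : ∀ᶠ n in cofinite, Z.rotate k (a i) n = Z.rotate (Z.exponent κ') (a i) n := by
      filter_upwards [hk, rotate_exponent_eventually_eq (κ := κ' - κ) (ha i) fun y hy =>
        hdiff y (sub_ne_zero.1 hy)] with n hkn hn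
      rw [← add_sub_cancel κ κ', map_add, Z.rotate_add, Z.rotate_apply _ (Z.rotate _ _), hn,
        ← hkn, Z.rotate_apply]
    obtain ⟨k', hk', hk'a⟩ := Z.exists_rotate_eq hagree
    refine ⟨insert t F, κ', k', hκ', hk', fun i => ?_, fun i => (hb i).trans (hk'a i).symm,
      Or.inr ⟨t, Finset.mem_insert_self t F, hx⟩⟩
    exact elements_mono (Finset.subset_insert t F) (ha i)

lemma forth (h : Z.Position β a b) (hγ : γ < β) (hx : x ∈ Z.elements Set.univ) :
    ∃ y ∈ Z.elements Set.univ,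
      Z.Position γ (Fin.snoc a x : Fin (m + 1) → ∀ n, M n) (Fin.snoc b y) := by
  obtain ⟨F, κ, k, hκ, hk, ha, hb, hxF⟩ := h.exists_finset_mem_elements hγ hx
  refine ⟨Z.rotate k x, elements_mono (Set.subset_univ _)
    (rotate_mem_elements hxF (fun _ => hκ.vertexSum_eq_zero) hk), F, κ, k, hκ, hk, ?_, ?_⟩
  · refine Fin.lastCases ?_ fun i => ?_
    · rwa [Fin.snoc_last]
    · rw [Fin.snoc_castSucc]
      exact ha i
  · refine Fin.lastCases ?_ fun i => ?_
    · rw [Fin.snoc_last, Fin.snoc_last]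
    · rw [Fin.snoc_castSucc, Fin.snoc_castSucc, hb]

end Position

/-- Along the edge above `y` the base points of `y` and of its parent agree, so that rotations of
them that preserve coordinatewise equality use exponents congruent modulo `N`. -/
lemma dvd_sub_of_parent_eq {y p : T} {κ l : T →₀ ℤ} {u v : ∀ n, M n} (hy : Z.parent y = some p)
    (hu : ∀ᶠ n in cofinite, u n = Z.rotate (Z.exponent l) (Z.basePoint p) n)
    (hv : ∀ᶠ n in cofinite, v n = Z.rotate (Z.exponent κ) (Z.basePoint y) n)
    (huv : ∀ n, Z.basePoint p n = Z.basePoint y n → u n = v n) : Z.N ∣ l y - κ y := by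
  obtain ⟨n, ⟨hun, hvn, hln, hκn, hN⟩, hn⟩ :=
    ((hu.and <| hv.and <| (exponent_eventually_eq_apply l y).and <|
      (exponent_eventually_eq_apply κ y).and <| Z.zpow_d_eq_zpow_d_iff (l y) (κ y)).and_frequently
        (Z.infinite_edgeSet y).frequently_cofinite).exists
  have hp : Z.basePoint p n = Z.d n := basePoint_of_mem (hy ▸ hn.2)
  have hy : Z.basePoint y n = Z.d n := basePoint_of_mem hn.1
  refine (hN (Z.edgeSet_subset y hn)).1 ?_
  calc (Z.σ n ^ l y) (Z.d n) = u n := by rw [hun, Z.rotate_apply, hln hn, hp]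
    _ = v n := huv n (hp.trans hy.symm)
    _ = (Z.σ n ^ κ y) (Z.d n) := by rw [hvn, Z.rotate_apply, hκn hn, hy]

end Coding

section ScottRank

variable {Rs : ℕ → ℕ → Type} {Mf : ℕ → Type} [∀ n, (relLang (Rs n)).Structure (Mf n)]

lemma RotationSystem.qfEquiv_of_eq_rotate (R : RotationSystem Mf)
    (hσ : ∀ n, R.σ n ∈ autSubgroup (relLang (Rs n)) (Mf n))
    {S : (prodLang Rs).Substructure (∀ n, Mf n)} {m : ℕ} {a b : Fin m → S} (k : ℕ → ℤ)
    (hab : ∀ i, (b i : ∀ n, Mf n) = R.rotate k (a i)) : QFEquiv (prodLang Rs) S S a b := by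
  obtain ⟨g, hg⟩ := piCongrRight_mem_autSubgroup fun n => zpow_mem (hσ n) (k n)
  refine QFEquiv.of_embeddings (g.toEmbedding.comp S.subtype) S.subtype (funext fun i => ?_)
  exact (DFunLike.congr_fun hg (a i : ∀ n, Mf n)).trans (hab i).symm

lemma ScottTools.QFEquiv.apply_eq_apply_iff {S : (prodLang Rs).Substructure (∀ n, Mf n)} {m : ℕ}
    {a b : Fin m → S} (h : QFEquiv (prodLang Rs) S S a b) (i j : Fin m) (n : ℕ) :
    (a i : ∀ n, Mf n) n = (a j : ∀ n, Mf n) n ↔ (b i : ∀ n, Mf n) n = (b j : ∀ n, Mf n) n := by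
  let E : (prodLang Rs).Relations 2 := Sum.inr ⟨⟨rfl⟩, n⟩
  have hE := h (E.formula₂ (Term.var i) (Term.var j)) (BoundedFormula.IsAtomic.rel _ _).isQF
  rwa [Formula.realize_rel₂, Formula.realize_rel₂] at hE

namespace Coding

variable {T : Type*} (Z : Coding.{0} T Mf)

variable (Rs) in
/-- The substructure of the product with universe `Z.elements univ`. -/
def substructure : (prodLang Rs).Substructure (∀ n, Mf n) where
  carrier := Z.elements Set.univ
  fun_mem f := isEmptyElim f

variable {Z}

lemma Position.bfEquiv (hσ : ∀ n, Z.σ n ∈ autSubgroup (relLang (Rs n)) (Mf n))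
    {β : Ordinal.{0}} {m : ℕ} {a b : Fin m → Z.substructure Rs}
    (h : Z.Position β ((↑) ∘ a) ((↑) ∘ b)) :
    BFEquiv (prodLang Rs) (Z.substructure Rs) (Z.substructure Rs) β m a b := by
  refine bfEquiv_of_backAndForth (fun β _ a b => Z.Position β ((↑) ∘ a) ((↑) ∘ b)) ?_ ?_ ?_ h
  · rintro _ _ _ _ ⟨_, _, k, _, _, _, hab⟩
    exact Z.qfEquiv_of_eq_rotate hσ k hab
  · intro _ _ _ _ _ h hγ x
    obtain ⟨y, hy, hxy⟩ := h.forth hγ x.2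
    refine ⟨⟨y, hy⟩, ?_⟩
    rwa [Fin.comp_snoc, Fin.comp_snoc]
  · intro _ _ _ _ _ h hγ y
    obtain ⟨x, hx, hyx⟩ := h.symm.forth hγ y.2
    refine ⟨⟨x, hx⟩, ?_⟩
    rw [Fin.comp_snoc, Fin.comp_snoc]
    exact hyx.symm

/-- The spoiler plays the base point of `y` and then descends to the children of `y`. -/
lemma dvd_of_bfEquivInf {m : ℕ} {a b : Fin m → Z.substructure Rs}
    (h : BFEquivInf (prodLang Rs) (Z.substructure Rs) (Z.substructure Rs) m a b)
    {i j : Fin m} (hai : (a i : ∀ n, Mf n) = Z.c) (hbi : (b i : ∀ n, Mf n) = Z.c)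
    {p : T} {l : T →₀ ℤ} (haj : (a j : ∀ n, Mf n) = Z.basePoint p)
    (hbj : ∀ᶠ n in cofinite, (b j : ∀ n, Mf n) n = Z.rotate (Z.exponent l) (Z.basePoint p) n)
    {y : T} (hy : Z.parent y = some p) : Z.N ∣ l y := by
  obtain ⟨x, hx⟩ := h.exists_snoc
    ⟨Z.basePoint y, Or.inr ⟨y, Set.mem_univ y, isOver_basePoint⟩⟩
  have hE := (hx 0).qfEquiv.apply_eq_apply_iff
  have hxc (n : ℕ) : (x : ∀ n, Mf n) n = Z.c n ↔ n ∉ Z.A (some y) := by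
    have hlast := hE (Fin.last m) i.castSucc n
    simp only [Fin.snoc_last, Fin.snoc_castSucc, hai, hbi] at hlast
    rw [← hlast, ← rotate_basePoint_eq_c_iff (k := 0), Z.rotate_zero]
  obtain ⟨κ, hκ, hxκ⟩ := isOver_of_eq_c_iff x.2 hxc
  have hchildren (z : T) (hz : Z.parent z = some y) : Z.N ∣ κ z :=
    dvd_of_bfEquivInf hx (i := i.castSucc) (j := Fin.last m) (by simpa) (by simpa) (by simp)
      (by simpa) hz
  have hκy : Z.N ∣ κ y := by
    by_contra hκy
    obtain ⟨z, hz, hκz⟩ := RankedForest.exists_child_not_dvd hκ hκy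
    exact hκz (hchildren z hz)
  refine (dvd_sub_left hκy).1 (dvd_sub_of_parent_eq hy hbj hxκ fun n hn => ?_)
  simpa using (hE j.castSucc (Fin.last m) n).1 (by simpa [haj] using hn)
termination_by Z.rank y
decreasing_by exact Z.rank_lt hz

lemma rank_le_scottRank (hσ : ∀ n, Z.σ n ∈ autSubgroup (relLang (Rs n)) (Mf n)) {r : T}
    (hr : Z.parent r = none) : Z.rank r ≤ ScottRank (prodLang Rs) (Z.substructure Rs) := by
  refine le_scottRank fun β hβ => ?_
  obtain ⟨z, hz, hβz⟩ := (Z.infinite_children hβ).nonempty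
  obtain ⟨κ, hκ, hκz⟩ := RankedForest.exists_isBalanced_singleton hr hz hβ.le hβz
  let c : Z.substructure Rs := ⟨Z.c, Or.inl (.of_forall fun _ => rfl)⟩
  let u : Z.substructure Rs := ⟨Z.basePoint r, Or.inr ⟨r, Set.mem_univ r, isOver_basePoint⟩⟩
  let v : Z.substructure Rs := ⟨Z.rotate (Z.exponent κ) (Z.basePoint r),
    Or.inr ⟨r, Set.mem_univ r, isOver_basePoint.rotate (hκ.vertexSum_eq_zero (by simp)) .rfl⟩⟩
  refine ⟨2, ![c, u], ![c, v], Position.bfEquiv hσ ⟨{r}, κ, Z.exponent κ, hκ, .rfl, ?_, ?_⟩,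
    fun h => ?_⟩
  · exact Fin.forall_fin_two.2
      ⟨Or.inl (.of_forall fun _ => rfl), Or.inr ⟨r, by simp, isOver_basePoint⟩⟩
  · exact Fin.forall_fin_two.2 ⟨funext fun n => (Z.zpow_c _ n).symm, rfl⟩
  · have hN : Z.N ∣ κ z :=
      dvd_of_bfEquivInf h (i := 0) (j := 1) rfl rfl rfl (.of_forall fun _ => rfl) hz
    rw [hκz, Int.dvd_neg] at hN
    exact Z.not_N_dvd_one ((Z.infinite_edgeSet r).mono (Z.edgeSet_subset r)) hN

end Coding

end ScottRank

theorem unbounded_scottRank_of_infinitely_nonfree_general {Rs : ℕ → ℕ → Type} {Mf : ℕ → Type}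
    [∀ n, (relLang (Rs n)).Structure (Mf n)] [∀ n, Nonempty (Mf n)]
    (hnonfree : {n : ℕ | ¬ FreeAut Rs Mf n}.Infinite)
    {α : Ordinal.{0}} (hα : α < (Order.succ (2 ^ ℵ₀ : Cardinal.{0})).ord) :
    ∃ S : (prodLang Rs).ElementarySubstructure (∀ n, Mf n),
      α ≤ ScottRank (prodLang Rs) S := by
  obtain ⟨R, hI, hσ⟩ := ProdStr.exists_rotationSystem hnonfree
  obtain ⟨A, hAI, hA⟩ := exists_isEdgeFamily (RankedForest.mk_ofOrdinal_le hα) hI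
  let Z : Coding.{0} _ Mf := ⟨RankedForest.ofOrdinal α, R, A, hAI, hA⟩
  have hnontrivial : {n | Nontrivial (Mf n)}.Infinite := hI.mono fun n hn =>
    nontrivial_of_ne _ _ (Z.σ_d hn)
  exact ⟨(Z.substructure Rs).toElementarySubstructure
      (exists_mem_realize_snoc hnontrivial Z.c fun _ => Or.inl),
    Z.rank_le_scottRank hσ (r := []) rfl⟩

end

/-- If `M̄ ∈ 𝕄` and the action of `Aut(Mₙ)` on `Mₙ` fails to be free for infinitely many
`n`, then for every ordinal `α < (2^ℵ₀)⁺` there is an elementary substructure of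
`∏ₙ Mₙ` of Scott rank at least `α`. -/
theorem unbounded_scottRank_of_infinitely_nonfree (Rs : ℕ → ℕ → Type) (Mf : ℕ → Type)
    [∀ n, (relLang (Rs n)).Structure (Mf n)] [∀ n, Fintype (Mf n)]
    (hcard : ∀ n, 2 ≤ Fintype.card (Mf n))
    (hnonfree : {n : ℕ | ¬ FreeAut Rs Mf n}.Infinite)
    (α : Ordinal.{0}) (hα : α < (Order.succ (2 ^ Cardinal.aleph0 : Cardinal.{0})).ord) :
    ∃ S : (prodLang Rs).ElementarySubstructure (∀ n, Mf n),
      α ≤ ScottRank (prodLang Rs) S := by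
  have (n : ℕ) : Nonempty (Mf n) := Fintype.card_pos_iff.1 (two_pos.trans_le (hcard n))
  exact unbounded_scottRank_of_infinitely_nonfree_general hnonfree hα
end

section
/- Let (P, ≤, δ) ∈ ℙ be nearly binary crosscutting, i.e., there is a finite downward-closed Q ⊆ P such that P∖Q is an antichain on which δ is identically 2. Then every model M of T_P with the property that any two elements of M that are E_p-equivalent for every p ∈ P are equal admits a finite base. -/
open FirstOrder

universe u v w

namespace PP

open FirstOrder

/-- The language `ℒ_P`: one binary relation symbol `E_p` for each `p : P`. -/
def LP (P : Type u) : FirstOrder.Language :=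
  ⟨fun _ => Empty, fun k => PLift (k = 2) × P⟩

/-- The interpretation of the relation symbol `E_p`. -/
def Rel {P : Type u} {M : Type w} [(LP P).Structure M] (p : P) (a b : M) : Prop :=
  Language.Structure.RelMap (L := LP P) (M := M) (n := 2) (⟨⟨rfl⟩, p⟩ : PLift (2 = 2) × P) ![a, b]

/-- `M` satisfies the axioms of `T_P` (with respect to the order `le` on `P` and the
splitting function `δ`): each `E_q` is an equivalence relation; `E_q` refines `E_{q'}` for
`q' ≤ q` and partitions each `E_{<q}`-class into exactly `δ q` classes; and coherent
sequences indexed by finite downward-closed sets have common refinements. -/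
def ModelsTP {P : Type u} (le : P → P → Prop) (δ : P → ℕ) (M : Type w)
    [(LP P).Structure M] : Prop :=
  (∀ p : P, Equivalence (fun a b : M => Rel p a b)) ∧
  (∀ p q : P, le p q → ∀ a b : M, Rel q a b → Rel p a b) ∧
  (∀ (q : P) (a : M), ∃ f : Fin (δ q) → M,
      (∀ (i : Fin (δ q)) (p : P), le p q → p ≠ q → Rel p (f i) a) ∧
      (∀ i j : Fin (δ q), i ≠ j → ¬ Rel q (f i) (f j)) ∧
      (∀ b : M, (∀ p : P, le p q → p ≠ q → Rel p b a) → ∃ i, Rel q b (f i))) ∧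
  (∀ Q : Finset P, (∀ p q : P, le p q → q ∈ Q → p ∈ Q) →
      ∀ a : P → M, (∀ p q : P, p ∈ Q → q ∈ Q → le p q → Rel p (a p) (a q)) →
      ∃ z : M, ∀ q ∈ Q, Rel q z (a q))

end PP

open ScottTools PP

/-!
By induction along the finite downward-closed set `Q`, each `E_q` with `q ∈ Q` has finitely many
classes, and then so does the intersection of these `E_q`. Let the finite set `B` meet every class
of this intersection. Suppose `a` and `b` have the same quantifier-free type over `B`, and pick `c`
in `B` in the same class as `a`, hence also in the same class as `b`. For `p ∉ Q` all strict
predecessors of `p` lie in `Q`, so `a`, `b` and `c` share an `E_{<p}`-class, which meets at most two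
`E_p`-classes. If `E_p` holds of neither `(c, a)` nor `(c, b)`, then `a` and `b` both lie in the
class that does not contain `c`.
-/

namespace PP

section Setoid

variable {α ι : Type*}

lemma sInf_image_rel_iff {E : ι → Setoid α} {I : Set ι} {a b : α} :
    sInf (E '' I) a b ↔ ∀ i ∈ I, E i a b :=
  Setoid.sInf_iff.trans Set.forall_mem_image

lemma finite_quotient_sInf {S : Set (Setoid α)} (hS : S.Finite)
    (h : ∀ r ∈ S, Finite (Quotient r)) : Finite (Quotient (sInf S)) := by
  have := hS.to_subtype
  have (r : S) : Finite (Quotient r.1) := h r r.2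
  refine Finite.of_injective
    (fun x (r : S) => Setoid.map_sInf r.2 x : Quotient (sInf S) → ∀ r : S, Quotient r.1) ?_
  rintro ⟨a⟩ ⟨b⟩ hab
  exact Quotient.sound fun r hr => Quotient.exact (congrFun hab ⟨r, hr⟩)

lemma exists_finite_representatives (r : Setoid α) [Finite (Quotient r)] :
    ∃ B : Set α, B.Finite ∧ ∀ a, ∃ c ∈ B, r c a :=
  ⟨_, Set.finite_range Quotient.out, fun a => ⟨_, ⟨⟦a⟧, rfl⟩, Quotient.mk_out a⟩⟩

/-- Every class of `r` meets at most `n` classes of `s`. The tuple `f` lists representatives of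
these classes; its entries may repeat and need not lie in the given class of `r`. -/
def SplitsIntoAtMost (r s : Setoid α) (n : ℕ) : Prop :=
  ∀ a, ∃ f : Fin n → α, ∀ b, r b a → ∃ i, s b (f i)

namespace SplitsIntoAtMost

variable {r s : Setoid α}

lemma finite_quotient {n : ℕ} (h : SplitsIntoAtMost r s n) [Finite (Quotient r)] :
    Finite (Quotient s) := by
  choose f hf using h
  refine Finite.of_surjective (fun x : Quotient r × Fin n => (⟦f x.1.out x.2⟧ : Quotient s)) ?_
  rintro ⟨b⟩
  obtain ⟨i, hi⟩ := hf _ b (r.symm (Quotient.mk_out b))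
  exact ⟨(⟦b⟧, i), Quotient.sound (s.symm hi)⟩

lemma rel_of_rel_iff (h : SplitsIntoAtMost r s 2) {a b c : α} (hca : r c a) (hcb : r c b)
    (hab : s c a ↔ s c b) : s a b := by
  by_cases ha : s c a
  · exact s.trans (s.symm ha) (hab.1 ha)
  have hb : ¬ s c b := fun hb => ha (hab.2 hb)
  obtain ⟨f, hf⟩ := h c
  obtain ⟨i, hi⟩ := hf a (r.symm hca)
  obtain ⟨j, hj⟩ := hf b (r.symm hcb)
  obtain ⟨k, hk⟩ := hf c (r.refl c)
  have hki : k ≠ i := by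
    rintro rfl
    exact ha (s.trans hk (s.symm hi))
  have hkj : k ≠ j := by
    rintro rfl
    exact hb (s.trans hk (s.symm hj))
  have hij : i = j := by omega
  subst hij
  exact s.trans hi (s.symm hj)

end SplitsIntoAtMost

end Setoid

section CrosscuttingFamily

variable {P M : Type*} [Preorder P] {E : P → Setoid M} {Q : Set P}

lemma finite_quotient_of_mem_of_isLowerSet (hQfin : Q.Finite) (hQ : IsLowerSet Q)
    (hsplit : ∀ q ∈ Q, ∃ n, SplitsIntoAtMost (sInf (E '' Set.Iio q)) (E q) n)
    {q : P} (hq : q ∈ Q) : Finite (Quotient (E q)) := by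
  have hwf : Q.WellFoundedOn (· < ·) := hQfin.wellFoundedOn
  refine hwf.induction (P := fun q => Finite (Quotient (E q))) hq fun q hq ih => ?_
  obtain ⟨n, hn⟩ := hsplit q hq
  have hsub : Set.Iio q ⊆ Q := fun p hp => hQ (le_of_lt hp) hq
  have : Finite (Quotient (sInf (E '' Set.Iio q))) :=
    finite_quotient_sInf ((hQfin.subset hsub).image E)
      (Set.forall_mem_image.2 fun p hp => ih p (hsub hp) hp)
  exact hn.finite_quotient

lemma rel_of_forall_rel_iff (hQanti : IsAntichain (· ≤ ·) Qᶜ)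
    (hbin : ∀ p ∉ Q, SplitsIntoAtMost (sInf (E '' Set.Iio p)) (E p) 2) {a b c : M}
    (hca : ∀ q ∈ Q, E q c a) (hab : ∀ p, E p c a ↔ E p c b) (p : P) : E p a b := by
  by_cases hp : p ∈ Q
  · exact (E p).trans ((E p).symm (hca p hp)) ((hab p).1 (hca p hp))
  have hlt : ∀ q < p, q ∈ Q := fun q hqp => by
    by_contra hq
    exact hQanti hq hp (ne_of_lt hqp) (le_of_lt hqp)
  exact (hbin p hp).rel_of_rel_iff (sInf_image_rel_iff.2 fun q hqp => hca q (hlt q hqp))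
    (sInf_image_rel_iff.2 fun q hqp => (hab q).1 (hca q (hlt q hqp))) (hab p)

end CrosscuttingFamily

lemma isBase_of_relMap₂ {L : FirstOrder.Language.{u, v}} {M : Type w} [L.Structure M] {B : Set M}
    (h : ∀ a b : M, (∀ c ∈ B, ∀ R : L.Relations 2,
      Language.Structure.RelMap R ![c, a] ↔ Language.Structure.RelMap R ![c, b]) → a = b) :
    IsBase L M B := by
  refine fun a b hab => h a b fun c hc R => ?_
  have realize_iff (x : M) :
      (R.formula₂ (.var 0) (.var 1)).Realize (Fin.snoc (fun _ => c) x : Fin (1 + 1) → M) ↔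
        Language.Structure.RelMap R ![c, x] :=
    Language.Formula.realize_rel₂
  rw [← realize_iff, ← realize_iff]
  exact hab 1 (fun _ => c) (fun _ => hc) _

section ModelsTP

variable {P : Type u} {M : Type w} [(LP P).Structure M] {le : P → P → Prop} {δ : P → ℕ}

/-- The relation `E_p` of a model of `T_P`, bundled as a setoid. -/
def ModelsTP.setoid (hM : ModelsTP le δ M) (p : P) : Setoid M :=
  ⟨Rel p, hM.1 p⟩

lemma ModelsTP.splitsIntoAtMost [PartialOrder P] (hM : ModelsTP (· ≤ ·) δ M) (q : P) :
    SplitsIntoAtMost (sInf (hM.setoid '' Set.Iio q)) (hM.setoid q) (δ q) := by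
  intro a
  obtain ⟨f, -, -, hf⟩ := hM.2.2.1 q a
  exact ⟨f, fun b hb => hf b fun p hp hne => sInf_image_rel_iff.1 hb p (lt_of_le_of_ne hp hne)⟩

end ModelsTP

end PP

theorem finite_base_of_nearly_binary_crosscutting_general
    {P : Type u} [Preorder P] {M : Type w} [(LP P).Structure M]
    (E : P → Setoid M) (hE : ∀ p a b, E p a b ↔ Rel p a b)
    (Q : Set P) (hQfin : Q.Finite) (hQ : IsLowerSet Q) (hQanti : IsAntichain (· ≤ ·) Qᶜ)
    (hsplit : ∀ q ∈ Q, ∃ n, SplitsIntoAtMost (sInf (E '' Set.Iio q)) (E q) n)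
    (hbin : ∀ p ∉ Q, SplitsIntoAtMost (sInf (E '' Set.Iio p)) (E p) 2)
    (hsep : ∀ a b : M, (∀ p : P, E p a b) → a = b) :
    ∃ B : Set M, B.Finite ∧ IsBase (LP P) M B := by
  have : Finite (Quotient (sInf (E '' Q))) :=
    finite_quotient_sInf (hQfin.image E)
      (Set.forall_mem_image.2 fun _ => finite_quotient_of_mem_of_isLowerSet hQfin hQ hsplit)
  obtain ⟨B, hB, hBrep⟩ := exists_finite_representatives (sInf (E '' Q))
  refine ⟨B, hB, isBase_of_relMap₂ fun a b hab => hsep a b ?_⟩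
  obtain ⟨c, hc, hca⟩ := hBrep a
  have hiff (p : P) : E p c a ↔ E p c b := by
    rw [hE, hE]
    exact hab c hc ⟨⟨rfl⟩, p⟩
  exact rel_of_forall_rel_iff hQanti hbin (sInf_image_rel_iff.1 hca) hiff

/-- If `(P, ≤, δ) ∈ ℙ` is nearly binary crosscutting, then every model of `T_P` in which
`E_p`-equivalence for all `p` implies equality admits a finite base. -/
theorem finite_base_of_nearly_binary_crosscutting
    {P : Type u} [PartialOrder P] [Countable P]
    (hdf : ∀ p : P, (Set.Iic p).Finite)
    (δ : P → ℕ) (hδ : ∀ p, 2 ≤ δ p)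
    (Q : Finset P) (hQdc : ∀ p q : P, p ≤ q → q ∈ Q → p ∈ Q)
    (hQanti : ∀ p q : P, p ∉ Q → q ∉ Q → p ≠ q → ¬ p < q)
    (hQδ : ∀ p : P, p ∉ Q → δ p = 2)
    (M : Type w) [(LP P).Structure M]
    (hM : ModelsTP (· ≤ · : P → P → Prop) δ M)
    (hsep : ∀ a b : M, (∀ p : P, Rel p a b) → a = b) :
    ∃ B : Set M, B.Finite ∧ IsBase (LP P) M B :=
  finite_base_of_nearly_binary_crosscutting_general hM.setoid (fun _ _ _ => .rfl) Q
    Q.finite_toSet (fun _ _ => hQdc _ _)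
    (fun p hp q hq hne hpq => hQanti p q hp hq hne (lt_of_le_of_ne hpq hne))
    (fun q _ => ⟨δ q, hM.splitsIntoAtMost q⟩) (fun p hp => hQδ p hp ▸ hM.splitsIntoAtMost p) hsep
end

section
/- Let C ∈ 𝐂 and let A ⊆ C be a finite nonempty coherent set. Then rnk^C(A) = min{ rnk^C({(f,g)}) : (f,g) ∈ A } (with the convention that the minimum is ∞ if every term is ∞). -/
namespace G2sys

/-- The Cantor group `2^ω` with coordinatewise addition mod 2. -/
abbrev G2 : Type := ℕ → ZMod 2

/-- `C ∈ 𝐂`: every vertical fiber `C[f]` is a coset of a subgroup of `2^ω`. -/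
def InC (C : Set (G2 × G2)) : Prop :=
  ∀ f : G2, ∃ (H : AddSubgroup G2) (g₀ : G2),
    {g : G2 | (f, g) ∈ C} = (fun h => g₀ + h) '' (H : Set G2)

/-- `A ⊆ 2^ω × 2^ω` is coherent if whenever two of its members agree on the first
coordinate up to `n`, they also agree on the second coordinate up to `n`. -/
def Coherent (A : Set (G2 × G2)) : Prop :=
  ∀ p ∈ A, ∀ q ∈ A, ∀ n : ℕ, (∀ m < n, p.1 m = q.1 m) → ∀ m < n, p.2 m = q.2 m

/-- `rnkGE C α A`: the rank of the coherent set `A ⊆ C` is at least `α`. -/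
def rnkGE (C : Set (G2 × G2)) : Ordinal.{0} → Set (G2 × G2) → Prop
  | α, A => ∀ β : Ordinal.{0}, β < α → ∀ f : G2, ∃ g : G2,
      insert (f, g) A ⊆ C ∧ Coherent (insert (f, g) A) ∧ rnkGE C β (insert (f, g) A)
  termination_by α => α

end G2sys

open G2sys

/-!
Given `f`, choose `x ∈ A` whose first coordinate agrees with `f` for as long as possible. If
`(f, g)` is coherent with `x`, it is coherent with all of `A`: if the first coordinate of `y ∈ A`
agrees with `f` up to `n`, it also agrees up to `n` with that of `x`, so `g`, `x.2` and `y.2` agree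
up to `n`. Hence the answers `g` to a challenge `f` that witness the rank of `{x}` also witness the
rank of `A`. Such an `x` exists as soon as the projection of `A` to the first coordinate is closed.
-/

namespace G2sys

open PiNat

theorem exists_mem_forall_mem_cylinder_of_isClosed {E : ℕ → Type*} [∀ n, TopologicalSpace (E n)]
    [∀ n, DiscreteTopology (E n)] {s : Set (∀ n, E n)} (hs : IsClosed s) (hne : s.Nonempty)
    (f : ∀ n, E n) :
    ∃ x ∈ s, ∀ y ∈ s, ∀ n, y ∈ cylinder f n → x ∈ cylinder f n := by
  by_cases hf : f ∈ s
  · exact ⟨f, hf, fun _ _ n _ => self_mem_cylinder f n⟩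
  · obtain ⟨x, hx, hxf⟩ := inter_cylinder_longestPrefix_nonempty hs hne f
    refine ⟨x, hx, fun y hy n hyf => cylinder_anti f ?_ hxf⟩
    have hfy : f ≠ y := fun h => hf (h ▸ hy)
    calc
      n ≤ firstDiff f y := (mem_cylinder_iff_le_firstDiff hfy n).1 ((mem_cylinder_comm f y n).1 hyf)
      _ ≤ longestPrefix f s := firstDiff_le_longestPrefix hs hf hy

variable {A B C : Set (G2 × G2)} {p x : G2 × G2} {α β : Ordinal.{0}}

theorem Coherent.mono (hAB : A ⊆ B) (hB : Coherent B) : Coherent A :=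
  fun p hp q hq => hB p (hAB hp) q (hAB hq)

theorem coherent_insert_iff :
    Coherent (insert p A) ↔
      Coherent A ∧ ∀ y ∈ A, ∀ n, y.1 ∈ cylinder p.1 n → y.2 ∈ cylinder p.2 n := by
  constructor
  · intro h
    exact ⟨h.mono (Set.subset_insert p A),
      fun y hy => h y (Set.mem_insert_of_mem p hy) p (Set.mem_insert p A)⟩
  · rintro ⟨hA, hp⟩ y (rfl | hy) z (rfl | hz) n hyz
    · exact self_mem_cylinder _ n
    · exact (mem_cylinder_comm _ _ n).1 (hp z hz n ((mem_cylinder_comm _ _ n).1 hyz))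
    · exact hp y hy n hyz
    · exact hA y hy z hz n hyz

theorem Coherent.insert_of_closest (hA : Coherent A) (hx : x ∈ A) (hpx : Coherent {p, x})
    (hclosest : ∀ y ∈ A, ∀ n, y.1 ∈ cylinder p.1 n → x.1 ∈ cylinder p.1 n) :
    Coherent (insert p A) := by
  refine coherent_insert_iff.2 ⟨hA, fun y hy n hyp => ?_⟩
  have hxp : x.1 ∈ cylinder p.1 n := hclosest y hy n hyp
  have hyx : y.1 ∈ cylinder x.1 n := fun m hm => (hyp m hm).trans (hxp m hm).symm
  have hyx₂ : y.2 ∈ cylinder x.2 n := hA y hy x hx n hyx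
  have hxp₂ : x.2 ∈ cylinder p.2 n := (coherent_insert_iff.1 hpx).2 x rfl n hxp
  exact fun m hm => (hyx₂ m hm).trans (hxp₂ m hm)

theorem rnkGE.anti (hAB : A ⊆ B) (hB : rnkGE C α B) : rnkGE C α A := by
  induction α using WellFoundedLT.induction generalizing A B with
  | ind α ih =>
    rw [rnkGE] at hB ⊢
    intro β hβ f
    obtain ⟨g, hgC, hg, hgβ⟩ := hB β hβ f
    have hsub : insert (f, g) A ⊆ insert (f, g) B := Set.insert_subset_insert hAB
    exact ⟨g, hsub.trans hgC, hg.mono hsub, ih β hβ hsub hgβ⟩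

theorem rnkGE.of_le (hβα : β ≤ α) (hA : rnkGE C α A) : rnkGE C β A := by
  rw [rnkGE] at hA ⊢
  exact fun γ hγ => hA γ (hγ.trans_le hβα)

theorem exists_coherent_insert_of_rnkGE_singleton (hAC : A ⊆ C)
    (hclosed : IsClosed (Prod.fst '' A)) (hne : A.Nonempty) (hA : Coherent A)
    (hrnk : ∀ x ∈ A, rnkGE C α {x}) (hβα : β < α) (f : G2) :
    ∃ g, insert (f, g) A ⊆ C ∧ Coherent (insert (f, g) A) ∧ rnkGE C β {(f, g)} := by
  obtain ⟨_, ⟨x, hx, rfl⟩, hclosest⟩ :=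
    exists_mem_forall_mem_cylinder_of_isClosed hclosed (hne.image Prod.fst) f
  have hxα := hrnk x hx
  rw [rnkGE] at hxα
  obtain ⟨g, hgC, hgx, hgβ⟩ := hxα β hβα f
  exact ⟨g, Set.insert_subset (hgC (Set.mem_insert _ _)) hAC,
    hA.insert_of_closest hx hgx fun y hy => hclosest y.1 (Set.mem_image_of_mem _ hy),
    hgβ.anti (Set.singleton_subset_iff.2 (Set.mem_insert _ _))⟩

end G2sys

theorem rnk_finite_coherent_eq_min_general (C : Set (G2 × G2)) (A : Set (G2 × G2)) (hAC : A ⊆ C)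
    (hclosed : IsClosed (Prod.fst '' A)) (hne : A.Nonempty) (hcoh : Coherent A) :
    ∀ α : Ordinal.{0}, rnkGE C α A ↔ ∀ x ∈ A, rnkGE C α {x} := by
  intro α
  refine ⟨fun hA x hx => hA.anti (Set.singleton_subset_iff.2 hx), fun hrnk => ?_⟩
  induction α using WellFoundedLT.induction generalizing A with
  | ind α ih =>
    rw [rnkGE]
    intro β hβα f
    obtain ⟨g, hgC, hg, hgβ⟩ :=
      exists_coherent_insert_of_rnkGE_singleton hAC hclosed hne hcoh hrnk hβα f
    have hclosed' : IsClosed (Prod.fst '' insert (f, g) A) := by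
      rw [Set.image_insert_eq]
      exact isClosed_singleton.union hclosed
    have hrnk' : ∀ y ∈ insert (f, g) A, rnkGE C β {y} :=
      Set.forall_mem_insert.2 ⟨hgβ, fun y hy => (hrnk y hy).of_le hβα.le⟩
    exact ⟨g, hgC, hg, ih β hβα _ hgC hclosed' (Set.insert_nonempty _ _) hg hrnk'⟩

/-- For `C ∈ 𝐂` and a finite nonempty coherent `A ⊆ C`, the rank of `A` is the minimum of
the ranks of its singletons: for every ordinal `α`, `rnk(A) ≥ α` iff `rnk({x}) ≥ α` for
every `x ∈ A`. -/
theorem rnk_finite_coherent_eq_min (C : Set (G2 × G2)) (hC : InC C)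
    (A : Set (G2 × G2)) (hAC : A ⊆ C) (hfin : A.Finite) (hne : A.Nonempty)
    (hcoh : Coherent A) :
    ∀ α : Ordinal.{0}, rnkGE C α A ↔ ∀ x ∈ A, rnkGE C α {x} := by
  exact rnk_finite_coherent_eq_min_general C A hAC (hfin.image Prod.fst).isClosed hne hcoh
end

section
/- For every ordinal α with 1 ≤ α < ω₁ there exists C ∈ 𝐂 with rnk^C(∅) = α, i.e., rnk^C(∅) ≥ α but not rnk^C(∅) ≥ α+1. -/
open G2sys

/-!
A coset in `2^ω` is the slice at height `1` of a subgroup of `ℤ/2 × 2^ω`. Allowing empty slices as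
well, families of every countable rank are built by induction, starting from the empty set in rank
`0`; rank at least `1` forces every fibre to be nonempty.

For the induction step, systems `C_m` whose ranks run through all ordinals below `α` are glued into
one. The fibre over `0` consists of the finitely supported sequences of odd weight, so a reply `g`
to `0` is nonzero, say `g m = 1`. By coherence every reply to an `f` in the cone
`0^(m+1) 1 * …` then takes the value `1` at `m`, and the fibres there are arranged so that its tail
is a reply to the tail of `f` in `C_m`: after `0` is played, the game is no easier than the one for
some `C_m`. Conversely, playing the `k`-th unit vector at `0` reduces the game to the one for `C_k`.
-/

namespace G2sys

section Rank

variable {C D A B : Set (G2 × G2)} {α β : Ordinal.{0}}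

theorem rnkGE_iff :
    rnkGE C α A ↔ ∀ β < α, ∀ f : G2, ∃ g : G2,
      insert (f, g) A ⊆ C ∧ Coherent (insert (f, g) A) ∧ rnkGE C β (insert (f, g) A) := by
  rw [rnkGE]

theorem rnkGE_zero : rnkGE C 0 A :=
  rnkGE_iff.2 fun _ hβ => absurd hβ not_lt_zero

theorem rnkGE.mono (h : rnkGE C α A) (hβ : β ≤ α) : rnkGE C β A :=
  rnkGE_iff.2 fun γ hγ => rnkGE_iff.1 h γ (hγ.trans_le hβ)

theorem Coherent.subset (hB : Coherent B) (h : A ⊆ B) : Coherent A :=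
  fun p hp q hq => hB p (h hp) q (h hq)

/-- In game terms, challenges are translated from the game for `D` to the game for `C`, and replies
are translated back, preserving the relation `R` between positions. -/
theorem rnkGE.of_simulation (R : Set (G2 × G2) → Set (G2 × G2) → Prop)
    (step : ∀ ⦃A B⦄, R A B → ∀ f', ∃ f, ∀ g,
      insert (f, g) A ⊆ C → Coherent (insert (f, g) A) →
        ∃ g', insert (f', g') B ⊆ D ∧ Coherent (insert (f', g') B) ∧
          R (insert (f, g) A) (insert (f', g') B))
    (hR : R A B) (h : rnkGE C α A) : rnkGE D α B := by
  induction α using WellFoundedLT.induction generalizing A B with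
  | ind α ih =>
    refine rnkGE_iff.2 fun β hβ f' => ?_
    obtain ⟨f, hf⟩ := step hR f'
    obtain ⟨g, hsub, hcoh, hrank⟩ := rnkGE_iff.1 h β hβ f
    obtain ⟨g', hsub', hcoh', hR'⟩ := hf g hsub hcoh
    exact ⟨g', hsub', hcoh', ih β hβ hR' hrank⟩

end Rank

section Slice

variable {K : G2 → AddSubgroup (ZMod 2 × G2)}

/-- The set whose fibre over `f` is the slice of `K f` at height `1`. These are exactly the sets
all of whose fibres are empty or cosets of subgroups. -/
def slice (K : G2 → AddSubgroup (ZMod 2 × G2)) : Set (G2 × G2) :=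
  {p | (1, p.2) ∈ K p.1}

theorem mem_slice {f g : G2} : (f, g) ∈ slice K ↔ (1, g) ∈ K f := Iff.rfl

theorem inC_slice (h : ∀ f, ∃ g, (f, g) ∈ slice K) : InC (slice K) := by
  intro f
  obtain ⟨g₀, hg₀⟩ := h f
  refine ⟨(K f).comap (AddMonoidHom.inr (ZMod 2) G2), g₀, Set.ext fun g => ?_⟩
  have hadd (k : G2) : (1, g₀ + k) ∈ K f ↔ (0, k) ∈ K f := by
    simpa using (K f).add_mem_cancel_left (y := (0, k)) (mem_slice.1 hg₀)
  constructor
  · intro hg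
    exact ⟨g - g₀, (hadd _).1 (by rwa [add_sub_cancel]), add_sub_cancel _ _⟩
  · rintro ⟨k, hk, rfl⟩
    exact (hadd k).2 hk

theorem inC_slice_of_rnkGE_one (h : rnkGE (slice K) 1 ∅) : InC (slice K) :=
  inC_slice fun f =>
    let ⟨g, hg, _⟩ := rnkGE_iff.1 h 0 zero_lt_one f
    ⟨g, hg (Set.mem_insert _ _)⟩

theorem not_rnkGE_one_slice_bot : ¬ rnkGE (slice fun _ => ⊥) 1 ∅ := by
  intro h
  obtain ⟨g, hg, -⟩ := rnkGE_iff.1 h 0 zero_lt_one 0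
  simpa [slice] using hg (Set.mem_insert _ _)

end Slice

section Sequences

variable {m n : ℕ} {f f' : G2}

/-- The sequence `f` with its first `n` terms dropped. -/
def tail (n : ℕ) : G2 →+ G2 :=
  AddMonoidHom.pi fun i => Pi.evalAddMonoidHom _ (i + n)

@[simp]
theorem tail_apply (n : ℕ) (f : G2) (i : ℕ) : tail n f i = f (i + n) := rfl

/-- The sequence consisting of the first `n` terms of `e` followed by `t`. -/
def splice (n : ℕ) (e t : G2) : G2 :=
  fun i => if i < n then e i else t (i - n)

theorem splice_of_lt {i : ℕ} (hi : i < n) (e t : G2) : splice n e t i = e i :=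
  if_pos hi

@[simp]
theorem tail_splice (n : ℕ) (e t : G2) : tail n (splice n e t) = t := by
  ext i
  simp [splice]

/-- The sequences starting with exactly `m + 1` zeros; the systems being glued live on the tails
`tail (m + 2) f` for `f ∈ cone m`. -/
def cone (m : ℕ) : Set G2 :=
  {f | (∀ i ≤ m, f i = 0) ∧ f (m + 1) = 1}

theorem zero_notMem_cone : (0 : G2) ∉ cone m :=
  fun h => zero_ne_one h.2

theorem cone_index_unique (hm : f ∈ cone m) (hn : f ∈ cone n) : m = n := by
  by_contra! hne
  obtain h | h := hne.lt_or_gt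
  · exact zero_ne_one ((hn.1 (m + 1) h).symm.trans hm.2)
  · exact zero_ne_one ((hm.1 (n + 1) h).symm.trans hn.2)

theorem splice_single_mem_cone (m : ℕ) (t : G2) :
    splice (m + 2) (Pi.single (m + 1) 1) t ∈ cone m := by
  constructor
  · intro i hi
    rw [splice_of_lt (by omega), Pi.single_eq_of_ne (by omega)]
  · rw [splice_of_lt (by omega), Pi.single_eq_same]

theorem mem_cone_congr (h : ∀ i < m + 2, f i = f' i) : f ∈ cone m ↔ f' ∈ cone m := by
  have hzero : (∀ i ≤ m, f i = 0) ↔ ∀ i ≤ m, f' i = 0 :=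
    forall₂_congr fun i hi => by rw [h i (by omega)]
  simp only [cone, Set.mem_ofPred_eq, hzero, h (m + 1) (by omega)]

theorem eq_of_mem_cone_of_tail_eq (hf : f ∈ cone m) (hf' : f' ∈ cone m)
    (h : ∀ i < n, tail (m + 2) f i = tail (m + 2) f' i) : ∀ i < n + (m + 2), f i = f' i := by
  intro i hi
  obtain hlow | rfl | hhigh : i ≤ m ∨ i = m + 1 ∨ m + 2 ≤ i := by omega
  · rw [hf.1 i hlow, hf'.1 i hlow]
  · rw [hf.2, hf'.2]
  · obtain ⟨j, rfl⟩ := Nat.exists_eq_add_of_le' hhigh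
    exact h j (by omega)

end Sequences

section Glue

variable {E : ℕ → G2 → AddSubgroup (ZMod 2 × G2)}

/-- The gluing of the systems `slice (E m)`. The fibre over `0` is the set of finitely supported
sequences of odd weight. The fibre over `f ∈ cone m` consists of those `g` for which
`(g m, tail (m + 2) g)` lies in the group `E m (tail (m + 2) f)`, so `tail (m + 2) g` is in the
fibre of `slice (E m)` if `g m = 1`. -/
noncomputable def glue (E : ℕ → G2 → AddSubgroup (ZMod 2 × G2)) (f : G2) :
    AddSubgroup (ZMod 2 × G2) :=
  (⨅ _ : f = 0, (Finsupp.degree.prod Finsupp.coeFnAddHom).range) ⊓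
    ⨅ m, ⨅ _ : f ∈ cone m, (E m (tail (m + 2) f)).comap
      (((Pi.evalAddMonoidHom _ m).prod (tail (m + 2))).comp (AddMonoidHom.snd (ZMod 2) G2))

theorem mem_slice_glue {f g : G2} :
    (f, g) ∈ slice (glue E) ↔
      (f = 0 → ∃ s : ℕ →₀ ZMod 2, s.degree = 1 ∧ ⇑s = g) ∧
      ∀ m, f ∈ cone m → (g m, tail (m + 2) g) ∈ E m (tail (m + 2) f) := by
  simp only [mem_slice, glue, AddSubgroup.mem_inf, AddSubgroup.mem_iInf, AddMonoidHom.mem_range,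
    AddSubgroup.mem_comap, AddMonoidHom.prod_apply, Prod.mk.injEq]
  rfl

section UpperBound

variable {A : Set (G2 × G2)} {m : ℕ} {g₀ : G2}

/-- The part of `A` over `cone m`, transported to tails. -/
def trace (m : ℕ) (A : Set (G2 × G2)) : Set (G2 × G2) :=
  Prod.map (tail (m + 2)) (tail (m + 2)) '' {p ∈ A | p.1 ∈ cone m}

theorem Coherent.trace (hA : Coherent A) : Coherent (trace m A) := by
  rintro _ ⟨p, ⟨hp, hpm⟩, rfl⟩ _ ⟨q, ⟨hq, hqm⟩, rfl⟩ n hn i hi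
  exact hA p hp q hq _ (eq_of_mem_cone_of_tail_eq hpm hqm hn) _ (by omega)

theorem trace_subset_slice (hA : Coherent A) (hsub : A ⊆ slice (glue E)) (hg₀ : (0, g₀) ∈ A)
    (hm : g₀ m = 1) : trace m A ⊆ slice (E m) := by
  rintro _ ⟨⟨f, g⟩, ⟨hp, hf⟩, rfl⟩
  have hgm : g m = 1 := by
    rw [← hm]
    exact hA _ hp _ hg₀ (m + 1) (fun i hi => hf.1 i (by omega)) m (by omega)
  have hmem := (mem_slice_glue.1 (hsub hp)).2 m hf
  rwa [hgm] at hmem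

theorem rnkGE_slice_of_rnkGE_glue {α : Ordinal.{0}} (hg₀ : (0, g₀) ∈ A) (hm : g₀ m = 1)
    (h : rnkGE (slice (glue E)) α A) : rnkGE (slice (E m)) α ∅ := by
  refine h.of_simulation (fun A B => (0, g₀) ∈ A ∧ B ⊆ trace m A) ?_ ⟨hg₀, Set.empty_subset _⟩
  rintro A B ⟨hg₀, hB⟩ t
  refine ⟨splice (m + 2) (Pi.single (m + 1) 1) t, fun g hsub hcoh => ⟨tail (m + 2) g, ?_⟩⟩
  have hB' : insert (t, tail (m + 2) g) B ⊆
      trace m (insert (splice (m + 2) (Pi.single (m + 1) 1) t, g) A) := by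
    refine Set.insert_subset ?_ (hB.trans (Set.image_mono fun p hp => ⟨Or.inr hp.1, hp.2⟩))
    exact ⟨_, ⟨Set.mem_insert _ _, splice_single_mem_cone m t⟩, by simp⟩
  have hg₀' := Set.mem_insert_of_mem (splice (m + 2) (Pi.single (m + 1) 1) t, g) hg₀
  exact ⟨hB'.trans (trace_subset_slice hcoh hsub hg₀' hm), hcoh.trace.subset hB', hg₀', hB'⟩

theorem exists_rnkGE_slice_of_rnkGE_glue {α : Ordinal.{0}}
    (h : rnkGE (slice (glue E)) (α + 1) ∅) : ∃ m, rnkGE (slice (E m)) α ∅ := by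
  obtain ⟨g, hsub, -, hrank⟩ := rnkGE_iff.1 h α (lt_add_one α) 0
  obtain ⟨s, hdeg, rfl⟩ := (mem_slice_glue.1 (hsub (Set.mem_insert _ _))).1 rfl
  have hs : s ≠ 0 := by
    rintro rfl
    simp at hdeg
  obtain ⟨m, hm⟩ := Finsupp.ne_iff.1 hs
  exact ⟨m, rnkGE_slice_of_rnkGE_glue (Set.mem_insert _ _) (Fin.eq_one_of_ne_zero _ hm) hrank⟩

end UpperBound

section LowerBound

variable {A : Set (G2 × G2)} {k : ℕ}

/-- The reply to `f` that selects the `k`-th system as early as `f` permits: the `k`-th unit vector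
if `f` is still indistinguishable from `0` at stage `k`, and `0` otherwise. -/
def marker (k : ℕ) (f : G2) : G2 :=
  if ∀ j ≤ k, f j = 0 then Pi.single k 1 else 0

theorem marker_of_forall_eq_zero {f : G2} (h : ∀ j ≤ k, f j = 0) : marker k f = Pi.single k 1 :=
  if_pos h

theorem marker_apply_of_ne {i : ℕ} (h : i ≠ k) (f : G2) : marker k f i = 0 := by
  unfold marker
  split_ifs
  · exact Pi.single_eq_of_ne h 1
  · rfl

theorem marker_congr {f f' : G2} {i : ℕ} (h : ∀ j ≤ i, f j = f' j) :
    marker k f i = marker k f' i := by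
  obtain rfl | hi := eq_or_ne i k
  · have hzero : (∀ j ≤ i, f j = 0) ↔ ∀ j ≤ i, f' j = 0 :=
      forall₂_congr fun j hj => by rw [h j hj]
    simp only [marker, hzero]
  · rw [marker_apply_of_ne hi, marker_apply_of_ne hi]

/-- The pairs conforming to the strategy that answers by `marker k` and, on `cone k`, continues with
the replies recorded in the position `A` of the game for the `k`-th system. -/
def responses (k : ℕ) (A : Set (G2 × G2)) : Set (G2 × G2) :=
  {p | (∀ i < k + 2, p.2 i = marker k p.1 i) ∧
    (p.1 ∈ cone k → (tail (k + 2) p.1, tail (k + 2) p.2) ∈ A) ∧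
    (p.1 ∉ cone k → tail (k + 2) p.2 = 0)}

theorem responses_mono {B : Set (G2 × G2)} (h : A ⊆ B) : responses k A ⊆ responses k B :=
  fun _ hp => ⟨hp.1, fun hk => h (hp.2.1 hk), hp.2.2⟩

theorem splice_mem_responses {f t : G2} (h : (tail (k + 2) f, t) ∈ A) (hf : f ∈ cone k) :
    (f, splice (k + 2) (marker k f) t) ∈ responses k A :=
  ⟨fun _ hi => splice_of_lt hi _ _, fun _ => by simpa using h, fun hk => absurd hf hk⟩

theorem mem_responses_iff_eq_marker {f g : G2} (hf : f ∉ cone k) :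
    (f, g) ∈ responses k A ↔ g = marker k f := by
  constructor
  · rintro ⟨hhead, -, htail⟩
    ext i
    obtain hi | hi := lt_or_ge i (k + 2)
    · exact hhead i hi
    · obtain ⟨j, rfl⟩ := Nat.exists_eq_add_of_le' hi
      rw [marker_apply_of_ne (by omega)]
      exact congrFun (htail hf) j
  · rintro rfl
    refine ⟨fun _ _ => rfl, fun hk => absurd hk hf, fun _ => ?_⟩
    ext i
    exact marker_apply_of_ne (by omega) f

theorem Coherent.responses (hA : Coherent A) : Coherent (responses k A) := by
  rintro ⟨f, g⟩ ⟨hhead, htrace, htail⟩ ⟨f', g'⟩ ⟨hhead', htrace', htail'⟩ n hn i hi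
  obtain hlow | hhigh := lt_or_ge i (k + 2)
  · rw [hhead i hlow, hhead' i hlow]
    exact marker_congr fun j hj => hn j (by omega)
  obtain ⟨j, rfl⟩ := Nat.exists_eq_add_of_le' hhigh
  have hcone : f ∈ cone k ↔ f' ∈ cone k := mem_cone_congr fun i _ => hn i (by omega)
  by_cases hf : f ∈ cone k
  · exact hA _ (htrace hf) _ (htrace' (hcone.1 hf)) (n - (k + 2)) (fun l _ => hn _ (by omega)) j
      (by omega)
  · exact congrFun ((htail hf).trans (htail' (mt hcone.2 hf)).symm) j

theorem marker_apply_eq_zero_of_mem_cone {f : G2} {m i : ℕ} (hf : f ∈ cone m) (hmk : m ≠ k)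
    (hi : i = m ∨ m + 2 ≤ i) : marker k f i = 0 := by
  obtain rfl | hik := eq_or_ne i k
  · exact congrFun (if_neg fun h => zero_ne_one ((h (m + 1) (by omega)).symm.trans hf.2)) i
  · exact marker_apply_of_ne hik f

theorem marker_mem_slice_glue {f : G2} (hf : f ∉ cone k) : (f, marker k f) ∈ slice (glue E) := by
  refine mem_slice_glue.2 ⟨?_, fun m hm => ?_⟩
  · rintro rfl
    refine ⟨Finsupp.single k 1, by simp, ?_⟩
    rw [marker_of_forall_eq_zero (f := 0) fun _ _ => rfl, Finsupp.single_eq_pi_single]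
  · have hmk : m ≠ k := fun h => hf (h ▸ hm)
    have htail : tail (m + 2) (marker k f) = 0 :=
      funext fun i => marker_apply_eq_zero_of_mem_cone hm hmk (Or.inr (by omega))
    rw [marker_apply_eq_zero_of_mem_cone hm hmk (Or.inl rfl), htail]
    exact zero_mem _

theorem responses_subset_slice_glue (hA : A ⊆ slice (E k)) :
    responses k A ⊆ slice (glue E) := by
  rintro ⟨f, g⟩ hp
  by_cases hf : f ∈ cone k
  · refine mem_slice_glue.2 ⟨?_, fun m hm => ?_⟩
    · rintro rfl
      exact absurd hf zero_notMem_cone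
    · obtain rfl : m = k := cone_index_unique hm hf
      have hgm : g m = 1 := by
        rw [show g m = marker m f m from hp.1 m (by omega), marker_of_forall_eq_zero hf.1,
          Pi.single_eq_same]
      rw [hgm]
      exact hA (hp.2.1 hf)
  · rw [mem_responses_iff_eq_marker hf] at hp
    exact hp ▸ marker_mem_slice_glue hf

theorem rnkGE_responses_of_rnkGE_slice {β : Ordinal.{0}} {B : Set (G2 × G2)}
    (hB : B ⊆ responses k ∅) (h : rnkGE (slice (E k)) β ∅) : rnkGE (slice (glue E)) β B := by
  refine h.of_simulation (fun A B => B ⊆ responses k A) ?_ hB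
  intro A B hB f
  refine ⟨tail (k + 2) f, fun t hsub hcoh => ?_⟩
  have hreply : ∃ g, (f, g) ∈ responses k (insert (tail (k + 2) f, t) A) := by
    by_cases hf : f ∈ cone k
    · exact ⟨_, splice_mem_responses (Set.mem_insert _ _) hf⟩
    · exact ⟨_, (mem_responses_iff_eq_marker hf).2 rfl⟩
  obtain ⟨g, hg⟩ := hreply
  have hresp := Set.insert_subset hg (hB.trans (responses_mono (Set.subset_insert _ _)))
  exact ⟨g, hresp.trans (responses_subset_slice_glue hsub), hcoh.responses.subset hresp, hresp⟩

/-- Two indices for each `β`, since the first challenge may lie in the cone of one of them. -/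
theorem rnkGE_glue {α : Ordinal.{0}}
    (h : ∀ β < α, ∃ k, rnkGE (slice (E k)) β ∅ ∧ rnkGE (slice (E (k + 1))) β ∅) :
    rnkGE (slice (glue E)) α ∅ := by
  refine rnkGE_iff.2 fun β hβ f => ?_
  obtain ⟨k, hk, hf⟩ : ∃ k, rnkGE (slice (E k)) β ∅ ∧ f ∉ cone k := by
    obtain ⟨k, hk, hk'⟩ := h β hβ
    by_cases hf : f ∈ cone k
    · exact ⟨k + 1, hk', fun hf' => by simpa using cone_index_unique hf hf'⟩
    · exact ⟨k, hk, hf⟩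
  have hsub : insert (f, marker k f) ∅ ⊆ responses k ∅ :=
    Set.insert_subset ((mem_responses_iff_eq_marker hf).2 rfl) (Set.empty_subset _)
  have hcoh : Coherent ∅ := fun _ hp => hp.elim
  exact ⟨marker k f, hsub.trans (responses_subset_slice_glue (Set.empty_subset _)),
    hcoh.responses.subset hsub, rnkGE_responses_of_rnkGE_slice hsub hk⟩

end LowerBound

end Glue

theorem countable_Iio_of_lt_ord_aleph_one {α : Ordinal.{0}} (h : α < (Cardinal.aleph 1).ord) :
    (Set.Iio α).Countable := by
  rw [Cardinal.lt_ord, ← Cardinal.succ_aleph0, Order.lt_succ_iff] at h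
  rw [← Cardinal.le_aleph0_iff_set_countable, Cardinal.mk_Iio_ordinal]
  exact Cardinal.lift_le_aleph0.2 h

theorem exists_slice_of_rank (α : Ordinal.{0}) (h : α < (Cardinal.aleph 1).ord) :
    ∃ K : G2 → AddSubgroup (ZMod 2 × G2),
      rnkGE (slice K) α ∅ ∧ ¬ rnkGE (slice K) (α + 1) ∅ := by
  induction α using WellFoundedLT.induction with
  | ind α ih =>
    obtain rfl | hα := eq_zero_or_pos α
    · exact ⟨fun _ => ⊥, rnkGE_zero, by simpa using not_rnkGE_one_slice_bot⟩
    obtain ⟨b, hb⟩ := (countable_Iio_of_lt_ord_aleph_one h).exists_eq_range ⟨0, hα⟩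
    have hbα (n : ℕ) : b n < α := hb.ge (Set.mem_range_self n)
    choose K hlower hupper using fun n => ih (b n) (hbα n) ((hbα n).trans h)
    refine ⟨glue fun n => K (n / 2), rnkGE_glue fun β hβ => ?_, fun hrank => ?_⟩
    · obtain ⟨n, rfl⟩ := hb.le hβ
      refine ⟨2 * n, ?_, ?_⟩
      · rw [show 2 * n / 2 = n by omega]
        exact hlower n
      · rw [show (2 * n + 1) / 2 = n by omega]
        exact hlower n
    · obtain ⟨m, hm⟩ := exists_rnkGE_slice_of_rnkGE_glue hrank
      exact hupper (m / 2) (hm.mono (Order.add_one_le_of_lt (hbα _)))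

end G2sys

/-- For every ordinal `α` with `1 ≤ α < ω₁` there is `C ∈ 𝐂` with `rnk^C(∅) = α`,
i.e. `rnk^C(∅) ≥ α` but not `rnk^C(∅) ≥ α + 1`. -/
theorem exists_inC_of_rank (α : Ordinal.{0}) (h1 : 1 ≤ α) (h2 : α < (Cardinal.aleph 1).ord) :
    ∃ C : Set (G2 × G2), InC C ∧ rnkGE C α ∅ ∧ ¬ rnkGE C (α + 1) ∅ := by
  obtain ⟨K, hlower, hupper⟩ := exists_slice_of_rank α h2
  exact ⟨slice K, inC_slice_of_rnkGE_one (hlower.mono h1), hlower, hupper⟩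
end
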